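/- arXiv:0909.1965 — 2 statements merged into one kernel-verified Lean document; each statement's English description precedes it below -/
import Mathlib

section
/- For every fixed point (i,j) ∈ ℕ², the univariate series G_{i,j}(t) := Σ_{n≥0} g(n;i,j) tⁿ ∈ ℚ[[t]] is algebraic: there is a nonzero polynomial P(T,t) ∈ ℚ[T,t] (depending on i and j) with P(G_{i,j}(t), t) = 0. -/
/-!
The proof follows the method of Tutte invariants of Bernardi, Bousquet-Mélou and Raschel. All
series are formal power series in `t` with coefficients polynomial in `x` and `y`, and negative
powers are cleared throughout.

Write `A(x) = ∑ G_{i,0} xⁱ`, `B(y) = ∑ G_{0,j} yʲ`, `a = G_{0,0}`, `b = G_{1,0}`. By the functional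
equation (`functional_eq`), modulo the kernel `xy - t (1 + y)(1 + x² y)` the two series
`M(x) = t (A(x) - a) + 1/x` and `N(y) = y / (t (1 + y)) - t (1 + y) B(y)` agree, and so do the two
rational functions `I(x) = (x + 1/x)/t - (x + 1/x)²` and `J(y) = y + 1/y - 2 + y / (t² (1 + y)²)`.
With `μ = 2 t b - 2`, the combination `-t (M + t a)(I + M² - M/t - μ)` has no pole at `x = 0`, and its
counterpart in `y`, multiplied by `1 + y`, is a power series too (`ker_dvd`). Two pole-free series
which agree modulo the kernel are constant (`invariant_lemma`), so both combinations are equal to a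
series `ξ` in `t` alone (`invariants_eq`).

On the `y`-side, in terms of `u = 1 - t N`, this says `W (u - p) = q` with
`W = t² J + u² - u - m`, `p = 1 + t² a`, `m = t² μ`, `q = t² ξ`. Wherever `J'(y) = 0`, the derivative with
respect to `y` gives the second equation `(2u - 1)(u - p) + W = 0` (`critical_point`). The critical
points are `y = 1` and the two power series solutions of `y = ± t (1 + y)²`, and eliminating between
these three pairs of equations (`elimination`) shows that `G_{0,0}`, `G_{1,0}` and `ξ` are algebraic
(`base_mem_Alg`).

Finally, extracting coefficients in the two constant invariants gives, one after the other, the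
algebraicity of the `G_{0,j}` (`By_mem_lowAlg`) and of the `G_{i,0}` (`Ax_mem_lowAlg`), and the
step-by-step recursion for walks propagates it to the whole quadrant (`G_mem_Alg`).
-/

noncomputable section

/-- The set of admissible steps for Gessel walks. -/
def gesselSteps : Set (ℤ × ℤ) := {(1, 0), (-1, 0), (1, 1), (-1, -1)}

/-- The position of the walk `w` after its first `k` steps. -/
def walkPos {n : ℕ} (w : Fin n → ℤ × ℤ) (k : ℕ) : ℤ × ℤ :=
  ∑ m ∈ Finset.univ.filter (fun m : Fin n => (m : ℕ) < k), w m

/-- `w` is a Gessel walk: every step is admissible and the walk (which starts at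
the origin) never leaves the first quadrant. -/
def IsGesselWalk {n : ℕ} (w : Fin n → ℤ × ℤ) : Prop :=
  (∀ m, w m ∈ gesselSteps) ∧ ∀ k ≤ n, 0 ≤ (walkPos w k).1 ∧ 0 ≤ (walkPos w k).2

/-- The number of Gessel walks of length `n` ending at `(i, j)`. -/
def g (n : ℕ) (i j : ℤ) : ℕ :=
  Nat.card {w : Fin n → ℤ × ℤ // IsGesselWalk w ∧ walkPos w n = (i, j)}

/-! ### The recursion for Gessel walks -/

/-- The admissible steps, as a finite set. -/
def stepFinset : Finset (ℤ × ℤ) := {(1, 0), (-1, 0), (1, 1), (-1, -1)}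

lemma mem_stepFinset (s : ℤ × ℤ) : s ∈ stepFinset ↔ s ∈ gesselSteps := by
  simp [stepFinset, gesselSteps]

lemma walkPos_self {n : ℕ} (w : Fin n → ℤ × ℤ) : walkPos w n = ∑ m, w m := by
  simp [walkPos]

lemma walkPos_init {n : ℕ} (w : Fin (n + 1) → ℤ × ℤ) (k : ℕ) (hk : k ≤ n) :
    walkPos (Fin.init w) k = walkPos w k := by
  unfold walkPos
  rw [Finset.sum_filter, Finset.sum_filter, Fin.sum_univ_castSucc]
  simp [Fin.init, hk]

lemma walkPos_succ {n : ℕ} (w : Fin (n + 1) → ℤ × ℤ) :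
    walkPos w (n + 1) = walkPos (Fin.init w) n + w (Fin.last n) := by
  rw [walkPos_self, walkPos_self, Fin.sum_univ_castSucc]
  rfl

lemma isGesselWalk_succ {n : ℕ} (w : Fin (n + 1) → ℤ × ℤ) :
    IsGesselWalk w ↔ IsGesselWalk (Fin.init w) ∧ w (Fin.last n) ∈ gesselSteps ∧
      0 ≤ (walkPos w (n + 1)).1 ∧ 0 ≤ (walkPos w (n + 1)).2 := by
  constructor
  · rintro ⟨h1, h2⟩
    refine ⟨⟨fun m => h1 _, fun k hk => ?_⟩, h1 _, h2 _ le_rfl⟩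
    rw [walkPos_init w k hk]
    exact h2 k (by omega)
  · rintro ⟨⟨h1, h2⟩, h3, h4⟩
    refine ⟨fun m => ?_, fun k hk => ?_⟩
    · induction m using Fin.lastCases with
      | last => exact h3
      | cast m => exact h1 m
    · rcases Nat.lt_or_ge n k with h | h
      · obtain rfl : k = n + 1 := by omega
        exact h4
      · rw [← walkPos_init w k h]
        exact h2 k h

instance finite_walks (n : ℕ) (p : ℤ × ℤ) :
    Finite {w : Fin n → ℤ × ℤ // IsGesselWalk w ∧ walkPos w n = p} := by
  have hfin : (Set.univ.pi fun _ : Fin n => (stepFinset : Set (ℤ × ℤ))).Finite :=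
    Set.Finite.pi fun _ => stepFinset.finite_toSet
  have hsub : {w | IsGesselWalk w ∧ walkPos w n = p} ⊆
      Set.univ.pi fun _ : Fin n => (stepFinset : Set (ℤ × ℤ)) := by
    rintro w ⟨hw, -⟩ m -
    exact (mem_stepFinset _).2 (hw.1 m)
  exact (hfin.subset hsub).to_subtype

/-- A walk of length `n + 1` is a walk of length `n` followed by one last step. -/
def walkEquiv (n : ℕ) (p : ℤ × ℤ) (hp : 0 ≤ p.1 ∧ 0 ≤ p.2) :
    {w : Fin (n + 1) → ℤ × ℤ // IsGesselWalk w ∧ walkPos w (n + 1) = p} ≃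
      Σ s : {s // s ∈ stepFinset},
        {w : Fin n → ℤ × ℤ // IsGesselWalk w ∧ walkPos w n = p - s.1} where
  toFun w := ⟨⟨w.1 (Fin.last n), (mem_stepFinset _).2 (w.2.1.1 _)⟩, ⟨Fin.init w.1,
    ((isGesselWalk_succ _).1 w.2.1).1, eq_sub_of_add_eq ((walkPos_succ w.1).symm.trans w.2.2)⟩⟩
  invFun v := ⟨Fin.snoc v.2.1 v.1.1, by
    have hpos : walkPos (Fin.snoc v.2.1 v.1.1 : Fin (n + 1) → ℤ × ℤ) (n + 1) = p := by
      rw [walkPos_succ, Fin.init_snoc, Fin.snoc_last, v.2.2.2]; simp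
    refine ⟨?_, hpos⟩
    rw [isGesselWalk_succ, hpos, Fin.init_snoc, Fin.snoc_last]
    exact ⟨v.2.2.1, (mem_stepFinset _).1 v.1.2, hp⟩⟩
  left_inv w := Subtype.ext (Fin.snoc_init_self w.1)
  right_inv v := Sigma.subtype_ext (Subtype.ext (Fin.snoc_last (α := fun _ => ℤ × ℤ) v.1.1 v.2.1))
    (Fin.init_snoc (α := fun _ => ℤ × ℤ) v.1.1 v.2.1)

lemma g_succ (n i j : ℕ) :
    g (n + 1) i j = g n (i + 1) j + g n (i - 1) j + g n (i + 1) (j + 1) + g n (i - 1) (j - 1) := by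
  unfold g
  rw [Nat.card_congr (walkEquiv n _ (by simp)), Nat.card_sigma,
    Finset.sum_coe_sort stepFinset fun s => Nat.card
      {w : Fin n → ℤ × ℤ // IsGesselWalk w ∧ walkPos w n = ((i : ℤ), (j : ℤ)) - s}, stepFinset]
  rw [Finset.sum_insert (by decide), Finset.sum_insert (by decide), Finset.sum_insert (by decide),
    Finset.sum_singleton]
  simp only [Prod.mk_sub_mk, sub_zero, sub_neg_eq_add]
  ring

lemma g_neg (n : ℕ) (i j : ℤ) (h : i < 0 ∨ j < 0) : g n i j = 0 := by
  have : IsEmpty {w : Fin n → ℤ × ℤ // IsGesselWalk w ∧ walkPos w n = (i, j)} := by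
    refine ⟨fun w => ?_⟩
    have := w.2.1.2 n le_rfl
    rw [w.2.2] at this
    omega
  exact Nat.card_of_isEmpty

lemma g_zero (i j : ℤ) : g 0 i j = if i = 0 ∧ j = 0 then 1 else 0 := by
  have hw : ∀ w : Fin 0 → ℤ × ℤ,
      (IsGesselWalk w ∧ walkPos w 0 = (i, j)) ↔ (i = 0 ∧ j = 0) := by
    intro w
    simp [IsGesselWalk, walkPos, Prod.ext_iff, eq_comm]
  split_ifs with h
  · have : Unique {w : Fin 0 → ℤ × ℤ // IsGesselWalk w ∧ walkPos w 0 = (i, j)} :=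
      ⟨⟨⟨finZeroElim, (hw _).2 h⟩⟩, fun w => Subtype.ext (Subsingleton.elim _ _)⟩
    exact Nat.card_unique
  · have : IsEmpty {w : Fin 0 → ℤ × ℤ // IsGesselWalk w ∧ walkPos w 0 = (i, j)} :=
      ⟨fun w => h ((hw _).1 w.2)⟩
    exact Nat.card_of_isEmpty

lemma g_eq_zero_of_lt (n : ℕ) : ∀ i j : ℤ, (n : ℤ) < i ∨ (n : ℤ) < j → g n i j = 0 := by
  induction n with
  | zero =>
    intro i j h
    rw [g_zero, if_neg (by simp at h; omega)]
  | succ n ih =>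
    intro i j h
    push_cast at h
    by_cases hij : i < 0 ∨ j < 0
    · exact g_neg _ _ _ hij
    · obtain ⟨hi, hj⟩ := not_or.1 hij
      lift i to ℕ using not_lt.1 hi
      lift j to ℕ using not_lt.1 hj
      rw [g_succ, ih, ih, ih, ih] <;> omega

/-! ### Generating series and the functional equation -/

/-- Power series in `t` whose coefficients are polynomials in one catalytic variable
(`x` or `y`, depending on the context). -/
abbrev Ser1 := PowerSeries (Polynomial ℚ)

/-- Power series in `t` whose coefficients are polynomials in `x` and `y`; the inner polynomial
variable is `x`, the outer one is `y`. -/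
abbrev Ser2 := PowerSeries (Polynomial (Polynomial ℚ))

/-- The numbers `g(n;i,j)` for `(i,j) ∈ ℕ²`, as rationals. -/
def gq (n i j : ℕ) : ℚ := (g n i j : ℚ)

lemma gq_of_lt (n i j : ℕ) (h : n < i ∨ n < j) : gq n i j = 0 := by
  rw [gq, g_eq_zero_of_lt n i j (by omega), Nat.cast_zero]

lemma gq_zero (i j : ℕ) : gq 0 i j = if i = 0 ∧ j = 0 then 1 else 0 := by
  rw [gq, g_zero]
  split_ifs <;> simp_all

lemma gq_succ_zero_zero (n : ℕ) : gq (n + 1) 0 0 = gq n 1 0 + gq n 1 1 := by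
  have h := g_succ n 0 0
  rw [g_neg n (_ - 1) (_ : ℕ) (by simp), g_neg n (_ - 1) (_ - 1) (by simp)] at h
  unfold gq
  rw [h]
  push_cast
  ring_nf

lemma gq_succ_succ_zero (n i : ℕ) :
    gq (n + 1) (i + 1) 0 = gq n (i + 2) 0 + gq n i 0 + gq n (i + 2) 1 := by
  have h := g_succ n (i + 1) 0
  rw [g_neg n (_ - 1) (_ - 1) (by simp)] at h
  unfold gq
  rw [h]
  push_cast
  ring_nf

lemma gq_succ_zero_succ (n j : ℕ) :
    gq (n + 1) 0 (j + 1) = gq n 1 (j + 1) + gq n 1 (j + 2) := by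
  have h := g_succ n 0 (j + 1)
  rw [g_neg n (_ - 1) (_ : ℕ) (by simp), g_neg n (_ - 1) (_ - 1) (by simp)] at h
  unfold gq
  rw [h]
  push_cast
  ring_nf

lemma gq_succ_succ_succ (n i j : ℕ) : gq (n + 1) (i + 1) (j + 1) =
    gq n (i + 2) (j + 1) + gq n i (j + 1) + gq n (i + 2) (j + 2) + gq n i j := by
  have h := g_succ n (i + 1) (j + 1)
  unfold gq
  rw [h]
  push_cast
  ring_nf

/-- The series `G_{i,j}(t)`. -/
def G (i j : ℕ) : PowerSeries ℚ := PowerSeries.mk fun n => gq n i j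

lemma coeff_G (n i j : ℕ) : PowerSeries.coeff n (G i j) = gq n i j := by
  rw [G, PowerSeries.coeff_mk]

/-- The series `Q(x,y) = ∑ G_{i,j} xⁱ yʲ`. -/
def Qxy : Ser2 := PowerSeries.mk fun n => ∑ j ∈ Finset.range (n + 1),
  ∑ i ∈ Finset.range (n + 1), Polynomial.monomial j (Polynomial.monomial i (gq n i j))

/-- The series `A(x) = Q(x,0)`. -/
def Ax : Ser1 := PowerSeries.mk fun n => ∑ i ∈ Finset.range (n + 1),
  Polynomial.monomial i (gq n i 0)

/-- The series `B(y) = Q(0,y)`. -/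
def By : Ser1 := PowerSeries.mk fun n => ∑ j ∈ Finset.range (n + 1),
  Polynomial.monomial j (gq n 0 j)

/-- Series in `t` alone, seen among the series with a catalytic variable. -/
def cst : PowerSeries ℚ →+* Ser1 := PowerSeries.map Polynomial.C

/-- Series in `t` and the catalytic variable `x`, seen as series in `t`, `x`, `y`. -/
def inX : Ser1 →+* Ser2 := PowerSeries.map Polynomial.C

/-- Series in `t` and the catalytic variable `y`, seen as series in `t`, `x`, `y`. -/
def inY : Ser1 →+* Ser2 := PowerSeries.map (Polynomial.mapRingHom Polynomial.C)

/-- The catalytic variable. -/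
def cat : Ser1 := PowerSeries.C Polynomial.X

/-- The variable `x` of `Ser2`. -/
def xx : Ser2 := PowerSeries.C (Polynomial.C Polynomial.X)

/-- The variable `y` of `Ser2`. -/
def yy : Ser2 := PowerSeries.C Polynomial.X

/-- The variable `t` of `Ser2`. -/
def tt : Ser2 := PowerSeries.X

/-- The kernel `xy (1 - t (x + x⁻¹ + xy + x⁻¹y⁻¹))`. -/
def ker : Ser2 := xx * yy - tt * ((1 + yy) * (1 + xx ^ 2 * yy))

lemma coeff_Qxy (n i j : ℕ) : ((PowerSeries.coeff n Qxy).coeff j).coeff i = gq n i j := by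
  rw [Qxy, PowerSeries.coeff_mk]
  simp only [Polynomial.finsetSum_coeff, Polynomial.coeff_monomial]
  by_cases hj : j < n + 1
  · rw [Finset.sum_eq_single j]
    · simp only [if_true, Polynomial.coeff_monomial]
      by_cases hi : i < n + 1
      · rw [Finset.sum_eq_single i] <;> simp +contextual [hi]
      · rw [gq_of_lt n i j (by omega), Finset.sum_eq_zero]
        intro k hk
        rw [if_neg (by simp at hk; omega)]
    · intro k _ hk
      simp [hk]
    · simp [hj]
  · rw [gq_of_lt n i j (by omega), Finset.sum_eq_zero]
    intro k hk
    have hkj : k ≠ j := by simp at hk; omega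
    simp [hkj]

lemma coeff_Ax (n i : ℕ) : (PowerSeries.coeff n Ax).coeff i = gq n i 0 := by
  rw [Ax, PowerSeries.coeff_mk]
  simp only [Polynomial.finsetSum_coeff, Polynomial.coeff_monomial]
  by_cases hi : i < n + 1
  · rw [Finset.sum_eq_single i] <;> simp +contextual [hi]
  · rw [gq_of_lt n i 0 (by omega), Finset.sum_eq_zero]
    intro k hk
    rw [if_neg (by simp at hk; omega)]

lemma coeff_By (n j : ℕ) : (PowerSeries.coeff n By).coeff j = gq n 0 j := by
  rw [By, PowerSeries.coeff_mk]
  simp only [Polynomial.finsetSum_coeff, Polynomial.coeff_monomial]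
  by_cases hj : j < n + 1
  · rw [Finset.sum_eq_single j] <;> simp +contextual [hj]
  · rw [gq_of_lt n 0 j (by omega), Finset.sum_eq_zero]
    intro k hk
    rw [if_neg (by simp at hk; omega)]

/-- The functional equation of Gessel walks, cleared of denominators. -/
lemma functional_eq : ker * Qxy =
    xx * yy - tt * (inX (Ax - cst (G 0 0))) - tt * (1 + yy) * inY By := by
  have e1 : ker * Qxy = PowerSeries.C (Polynomial.C Polynomial.X * Polynomial.X) * Qxy
      - PowerSeries.X * (PowerSeries.C (1 + Polynomial.X + Polynomial.C (Polynomial.X ^ 2) *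
        Polynomial.X + Polynomial.C (Polynomial.X ^ 2) * Polynomial.X ^ 2) * Qxy) := by
    simp only [ker, xx, yy, tt, map_mul, map_add, map_one, map_pow]; ring
  have e2 : xx * yy - tt * (inX (Ax - cst (G 0 0))) - tt * (1 + yy) * inY By =
      PowerSeries.C (Polynomial.C Polynomial.X * Polynomial.X) -
      PowerSeries.X * (inX (Ax - cst (G 0 0)) + PowerSeries.C (1 + Polynomial.X) * inY By) := by
    simp only [xx, yy, tt, map_mul, map_add, map_one]; ring
  rw [e1, e2]
  ext n j i
  rcases n with _ | n
  · have hQ : PowerSeries.coeff 0 Qxy = 1 := by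
      ext j i
      rw [coeff_Qxy, gq_zero]
      rcases j with _ | j <;> rcases i with _ | i <;> simp [Polynomial.coeff_one]
    simp only [map_sub, PowerSeries.coeff_zero_X_mul, sub_zero, PowerSeries.coeff_C_mul,
      PowerSeries.coeff_zero_C, hQ, mul_one]
  · simp only [map_sub, map_add, PowerSeries.coeff_succ_X_mul, PowerSeries.coeff_C_mul,
      PowerSeries.coeff_C, mul_assoc, Polynomial.coeff_C_mul, add_mul, one_mul,
      Polynomial.coeff_add, Polynomial.coeff_sub, inX, inY, cst, PowerSeries.coeff_map, coeff_G,
      Polynomial.coe_mapRingHom, Polynomial.coeff_map, Polynomial.coeff_C, Nat.succ_ne_zero,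
      if_false, Polynomial.coeff_zero]
    rcases j with _ | _ | j <;> rcases i with _ | _ | i <;>
      simp [Polynomial.coeff_X_mul, coeff_Qxy, coeff_Ax, coeff_By,
        Polynomial.coeff_X_pow_mul', Polynomial.coeff_C, gq_succ_zero_zero, gq_succ_succ_zero,
        gq_succ_zero_succ, gq_succ_succ_succ]
    all_goals ring

/-! ### The pair of invariants -/

/-- The coefficient of the `j`-th power of the catalytic variable. -/
def cf (j : ℕ) (f : Ser1) : PowerSeries ℚ :=
  PowerSeries.mk fun n => (PowerSeries.coeff n f).coeff j

/-- `(f - f₀) / x`, where `f₀` is the value of `f` at `x = 0` and `x` is the catalytic variable. -/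
def shift (f : Ser1) : Ser1 := PowerSeries.mk fun n => (PowerSeries.coeff n f).divX

lemma cf_shift (j : ℕ) (f : Ser1) : cf j (shift f) = cf (j + 1) f := by
  ext n
  simp [cf, shift, Polynomial.coeff_divX]

lemma eq_shift (f : Ser1) : f = cst (cf 0 f) + cat * shift f := by
  ext1 n
  simp only [cst, cf, cat, shift, map_add, PowerSeries.coeff_map, PowerSeries.coeff_mk,
    PowerSeries.coeff_C_mul]
  rw [add_comm, Polynomial.X_mul_divX_add]

lemma cf_Ax (i : ℕ) : cf i Ax = G i 0 := by
  ext n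
  simp [cf, coeff_Ax, coeff_G]

lemma cf_By (j : ℕ) : cf j By = G 0 j := by
  ext n
  simp [cf, coeff_By, coeff_G]

lemma inX_cat : inX cat = xx := by simp [inX, cat, xx]

lemma inY_cat : inY cat = yy := by simp [inY, cat, yy]

lemma inX_X : inX PowerSeries.X = tt := by simp [inX, tt]

lemma inY_X : inY PowerSeries.X = tt := by simp [inY, tt]

lemma inY_cst (c : PowerSeries ℚ) : inY (cst c) = inX (cst c) := by
  ext1 n
  simp [inX, inY, cst]

/-- The invariant in `x`, namely `-t (M + t a)(I + M² - M/t - μ)` with `M = t (A(x) - a) + 1/x`,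
`I = (x + 1/x)/t - (x + 1/x)²`, `μ = 2 t b - 2`, where `a = G 0 0` and `b = G 1 0`. -/
def Xi : Ser1 :=
  -(2 * PowerSeries.X ^ 2 * shift (shift Ax) - PowerSeries.X * shift Ax
      + PowerSeries.X ^ 3 * cat * shift Ax ^ 2 + 1 - PowerSeries.X * cat)
    * (1 + cat * PowerSeries.X * Ax)

/-- The invariant in `y`, multiplied by `1 + y`: the analogue of `Xi` with `M`, `I` replaced by
`N = y / (t (1 + y)) - t (1 + y) B(y)` and `J = y + 1/y - 2 + y / (t² (1 + y)²)`. -/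
def Up : Ser1 :=
  ((1 - cat) ^ 2 + cat * (1 - cat) * By + PowerSeries.X ^ 2 * cat * (1 + cat) ^ 2 * By ^ 2
      - (2 * PowerSeries.X * cst (G 1 0) - 2) * cat)
    * (-1 + PowerSeries.X ^ 2 * (1 + cat) * (By + shift By))

/-- The two invariants agree modulo the kernel, up to a monomial factor: the functional equation
turns `t (A(x) - a)` into `x y - t (1 + y) B(y)`, and the rest is a polynomial division. -/
lemma ker_dvd_mul : ker ∣ xx * (xx * (yy * ((1 + yy) * inX Xi - inY Up))) := by
  have hF := functional_eq
  have hA : inX Ax = inX (cst (G 0 0)) + xx * inX (shift Ax) := by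
    rw [← inX_cat, ← map_mul, ← map_add, ← cf_Ax, ← eq_shift]
  have hA1 : inX (shift Ax) = inX (cst (G 1 0)) + xx * inX (shift (shift Ax)) := by
    rw [← inX_cat, ← map_mul, ← map_add, ← cf_Ax, ← cf_shift, ← eq_shift]
  have hB : inY By = inX (cst (G 0 0)) + yy * inY (shift By) := by
    rw [← inY_cat, ← inY_cst, ← map_mul, ← map_add, ← cf_By, ← eq_shift]
  simp only [Xi, Up, map_mul, map_add, map_neg, map_sub, map_one, map_pow, map_ofNat, inX_cat,
    inY_cat, inX_X, inY_X, inY_cst]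
  rw [map_sub] at hF
  generalize inX Ax = A at *
  generalize inX (shift Ax) = A1 at *
  generalize inX (shift (shift Ax)) = A2 at *
  generalize inY By = B at *
  generalize inY (shift By) = B1 at *
  generalize inX (cst (G 0 0)) = a at *
  generalize inX (cst (G 1 0)) = b at *
  generalize Qxy = Q at *
  unfold ker at *
  generalize xx = x at *
  generalize yy = y at *
  generalize tt = t at *
  -- `s` is `t (A - a)`, and `s₀` its value modulo the kernel.
  obtain ⟨s, hs⟩ : ∃ s, s = t * (A - a) := ⟨_, rfl⟩
  obtain ⟨s₀, hs₀⟩ : ∃ s₀, s₀ = x * y - t * (1 + y) * B := ⟨_, rfl⟩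
  have hss : s = s₀ - (x * y - t * ((1 + y) * (1 + x ^ 2 * y))) * Q := by
    rw [hs, hs₀, hF]; ring
  have hxs : t * x * A1 = s := by rw [hs, hA]; ring
  have hX : x ^ 2 * (-(2 * t ^ 2 * A2 - t * A1 + t ^ 3 * x * A1 ^ 2 + 1 - t * x)
      * (1 + x * t * A)) =
      -(2 * t * (s - t * b * x) - x * s + t * x * s ^ 2 + x ^ 2 - t * x ^ 3)
        * (1 + x * (s + t * a)) := by
    have e1 : s + t * a = t * A := by rw [hs]; ring
    have e2 : s - t * b * x = t * x ^ 2 * A2 := by rw [← hxs, hA1]; ring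
    rw [e1, e2, ← hxs]; ring
  have hY : y * (((1 - y) ^ 2 + y * (1 - y) * B + t ^ 2 * y * (1 + y) ^ 2 * B ^ 2
      - (2 * t * b - 2) * y) * (-1 + t ^ 2 * (1 + y) * (B + B1))) =
      ((1 - y) ^ 2 + y * (1 - y) * B + t ^ 2 * y * (1 + y) ^ 2 * B ^ 2
      - (2 * t * b - 2) * y) * (-y + t ^ 2 * (1 + y) * ((1 + y) * B - a)) := by
    linear_combination (-((1 - y) ^ 2 + y * (1 - y) * B + t ^ 2 * y * (1 + y) ^ 2 * B ^ 2
      - (2 * t * b - 2) * y) * t ^ 2 * (1 + y)) * hB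
  have e : x * (x * (y * ((1 + y) * (-(2 * t ^ 2 * A2 - t * A1 + t ^ 3 * x * A1 ^ 2 + 1 - t * x)
      * (1 + x * t * A)) - ((1 - y) ^ 2 + y * (1 - y) * B + t ^ 2 * y * (1 + y) ^ 2 * B ^ 2
      - (2 * t * b - 2) * y) * (-1 + t ^ 2 * (1 + y) * (B + B1))))) =
      y * (1 + y) * (-(2 * t * (s - t * b * x) - x * s + t * x * s ^ 2 + x ^ 2 - t * x ^ 3)
        * (1 + x * (s + t * a))) - x ^ 2 *
      (((1 - y) ^ 2 + y * (1 - y) * B + t ^ 2 * y * (1 + y) ^ 2 * B ^ 2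
      - (2 * t * b - 2) * y) * (-y + t ^ 2 * (1 + y) * ((1 + y) * B - a))) := by
    rw [← hX, ← hY]; ring
  rw [e]
  -- The value at `s₀` is a multiple of the kernel, by an explicit polynomial division.
  have h0 : y * (1 + y) * (-(2 * t * (s₀ - t * b * x) - x * s₀ + t * x * s₀ ^ 2 + x ^ 2
      - t * x ^ 3) * (1 + x * (s₀ + t * a))) - x ^ 2 *
      (((1 - y) ^ 2 + y * (1 - y) * B + t ^ 2 * y * (1 + y) ^ 2 * B ^ 2
      - (2 * t * b - 2) * y) * (-y + t ^ 2 * (1 + y) * ((1 + y) * B - a))) =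
      (x * y - t * ((1 + y) * (1 + x ^ 2 * y))) *
      (x * y * B + 2 * x * y ^ 2 - x * y ^ 2 * B - x ^ 3 * y + x ^ 3 * y ^ 3 - 2 * t * y * B
        - 2 * t * y ^ 2 * B - 2 * t * x * y * b - t * x ^ 2 * a + t * x ^ 2 * B
        + t * x ^ 2 * y * B + t * x ^ 2 * y ^ 2 * a - 3 * t * x ^ 2 * y ^ 2 * B
        - 3 * t * x ^ 2 * y ^ 3 * B - 2 * t ^ 2 * x * y * B * a + 3 * t ^ 2 * x * y * B ^ 2
        - 2 * t ^ 2 * x * y ^ 2 * B * a + 6 * t ^ 2 * x * y ^ 2 * B ^ 2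
        + 3 * t ^ 2 * x * y ^ 3 * B ^ 2) := by
    rw [hs₀]; ring
  have h1 : (x * y - t * ((1 + y) * (1 + x ^ 2 * y))) ∣ s - s₀ :=
    ⟨-Q, by rw [hss]; ring⟩
  obtain ⟨d, hd⟩ := h1
  obtain rfl : s = s₀ + (x * y - t * ((1 + y) * (1 + x ^ 2 * y))) * d := by rw [← hd]; ring
  refine (dvd_sub_right ⟨_, h0⟩).1 ?_
  generalize x * y - t * ((1 + y) * (1 + x ^ 2 * y)) = κ
  exact ⟨y * (1 + y) * d * ((2 * t - x + t * x * (2 * s₀ + κ * d))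
    * (1 + x * (s₀ + κ * d + t * a)) +
    x * (2 * t * (s₀ - t * b * x) - x * s₀ + t * x * s₀ ^ 2 + x ^ 2 - t * x ^ 3)), by ring⟩

/-- Cancelling a factor `z` that generates the kernel of a map to a domain not killing `k`. -/
lemma dvd_of_dvd_mul_left {S T : Type*} [CommRing S] [IsDomain S] [CommRing T] [IsDomain T]
    (π : S →+* T) {z k F : S} (hz : z ≠ 0) (hπz : π z = 0) (hker : ∀ f, π f = 0 → z ∣ f)
    (hk : π k ≠ 0) (h : k ∣ z * F) : k ∣ F := by
  obtain ⟨H, hH⟩ := h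
  have h0 : π k * π H = 0 := by rw [← map_mul, ← hH, map_mul, hπz, zero_mul]
  obtain ⟨H', rfl⟩ := hker H ((mul_eq_zero.1 h0).resolve_left hk)
  exact ⟨H', mul_left_cancel₀ hz (by rw [hH]; ring)⟩

lemma C_dvd_of_forall {R : Type*} [CommRing R] (a : R) (f : PowerSeries R)
    (h : ∀ n, a ∣ PowerSeries.coeff n f) : PowerSeries.C a ∣ f := by
  choose c hc using h
  refine ⟨PowerSeries.mk c, ?_⟩
  ext n
  rw [PowerSeries.coeff_C_mul, PowerSeries.coeff_mk, hc]

/-- The monomial factor of `ker_dvd_mul` is removed: modulo `x` or `y` the kernel is nonzero. -/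
lemma ker_dvd : ker ∣ (1 + yy) * inX Xi - inY Up := by
  have hx : xx ≠ 0 := fun h => by
    have := congrArg (fun f => ((PowerSeries.coeff 0 f).coeff 0).coeff 1) h
    simp [xx] at this
  have hy : yy ≠ 0 := fun h => by
    have := congrArg (fun f => ((PowerSeries.coeff 0 f).coeff 1).coeff 0) h
    simp [yy] at this
  have hxcancel : ∀ F, ker ∣ xx * F → ker ∣ F := fun F =>
    dvd_of_dvd_mul_left
      (PowerSeries.map (Polynomial.mapRingHom (Polynomial.constantCoeff (R := ℚ)))) hx
      (by simp [xx])
      (fun f hf => C_dvd_of_forall _ _ fun n => by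
        rw [Polynomial.C_dvd_iff_dvd_coeff]
        intro j
        rw [Polynomial.X_dvd_iff]
        have := congrArg (fun f => (PowerSeries.coeff n f).coeff j) hf
        simpa using this)
      (fun h => by
        have := congrArg (fun f => (PowerSeries.coeff 1 f).coeff 0) h
        simp [ker, xx, yy, tt, ← map_mul] at this
        simp at this)
  have hycancel : ∀ F, ker ∣ yy * F → ker ∣ F := fun F =>
    dvd_of_dvd_mul_left
      (PowerSeries.map (Polynomial.constantCoeff (R := Polynomial ℚ))) hy
      (by simp [yy])
      (fun f hf => C_dvd_of_forall _ _ fun n => by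
        rw [Polynomial.X_dvd_iff]
        have := congrArg (fun f => (PowerSeries.coeff n f)) hf
        simpa using this)
      (fun h => by
        simp [ker, xx, yy, tt] at h)
  exact hycancel _ (hxcancel _ (hxcancel _ ker_dvd_mul))

/-- A pair of invariants without poles which vanishes at `x = 0` is zero. At each order in `t` the
kernel reduces to `x y`, by induction; putting `x = 0`, then `y = 0`, gives the vanishing. -/
lemma invariant_lemma (A B : Ser1) (h : ker ∣ (1 + yy) * inX A - inY B) (hA : cf 0 A = 0) :
    A = 0 ∧ B = 0 := by
  obtain ⟨H, hH⟩ := h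
  have key : ∀ n, PowerSeries.coeff n A = 0 ∧ PowerSeries.coeff n B = 0 ∧
      PowerSeries.coeff n H = 0 := by
    intro n
    induction n using Nat.strong_induction_on with
    | _ n ih =>
    have e1 : ker * H = PowerSeries.C (Polynomial.C Polynomial.X * Polynomial.X) * H -
        PowerSeries.X * (PowerSeries.C ((1 + Polynomial.X) *
          (1 + Polynomial.C Polynomial.X ^ 2 * Polynomial.X)) * H) := by
      simp only [ker, xx, yy, tt, map_mul, map_add, map_one, map_pow]; ring
    have e2 : (1 + yy) = PowerSeries.C (1 + Polynomial.X) := by simp [yy]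
    have hn := congrArg (PowerSeries.coeff n) hH
    rw [e1, e2, map_sub, map_sub, PowerSeries.coeff_C_mul, PowerSeries.coeff_C_mul] at hn
    have e3 : PowerSeries.coeff n (PowerSeries.X * (PowerSeries.C ((1 + Polynomial.X) *
          (1 + Polynomial.C Polynomial.X ^ 2 * Polynomial.X)) * H)) = 0 := by
      rcases n with _ | n
      · rw [PowerSeries.coeff_zero_X_mul]
      · rw [PowerSeries.coeff_succ_X_mul, PowerSeries.coeff_C_mul, (ih n n.lt_succ_self).2.2,
          mul_zero]
    rw [e3, sub_zero, inX, inY, PowerSeries.coeff_map, PowerSeries.coeff_map] at hn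
    have hA0 : (PowerSeries.coeff n A).coeff 0 = 0 := by
      have := congrArg (PowerSeries.coeff n) hA
      simpa [cf] using this
    have hB0 : PowerSeries.coeff n B = 0 := by
      have := congrArg (Polynomial.mapRingHom (Polynomial.constantCoeff (R := ℚ))) hn
      simp only [map_sub, map_mul] at this
      simpa [hA0, Polynomial.map_map] using this
    have hA' : PowerSeries.coeff n A = 0 := by
      rw [hB0] at hn
      have := congrArg (Polynomial.constantCoeff) hn
      simpa using this
    refine ⟨hA', hB0, ?_⟩
    rw [hA', hB0] at hn
    simpa [Polynomial.X_ne_zero] using hn.symm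
  exact ⟨PowerSeries.ext fun n => by simp [(key n).1],
    PowerSeries.ext fun n => by simp [(key n).2.1]⟩

lemma cf_zero (f : Ser1) : cf 0 f = PowerSeries.map Polynomial.constantCoeff f := by
  ext n
  simp [cf]

/-- The common constant value of the two invariants, read off from the invariant in `y` at `y = 0`. -/
def xi : PowerSeries ℚ := -1 + PowerSeries.X ^ 2 * (G 0 0 + G 0 1)

/-- The two invariants are constant, with common value `xi`. -/
lemma invariants_eq : Xi = cst xi ∧ Up = (1 + cat) * cst xi := by
  have hk := ker_dvd
  have h := invariant_lemma (Xi - cst (cf 0 Xi)) (Up - (1 + cat) * cst (cf 0 Xi)) (by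
      have e : (1 + yy) * inX (Xi - cst (cf 0 Xi)) - inY (Up - (1 + cat) * cst (cf 0 Xi)) =
          (1 + yy) * inX Xi - inY Up := by
        simp only [map_sub, map_mul, map_add, map_one, inY_cst, inY_cat]; ring
      rw [e]
      exact hk) (by
      rw [cf_zero, map_sub, ← cf_zero]
      ext n
      simp [cst])
  have h1 := sub_eq_zero.1 h.1
  have h2 := sub_eq_zero.1 h.2
  have hxi : xi = cf 0 Xi := by
    have h3 := congrArg (cf 0) h2
    have hc : PowerSeries.map Polynomial.constantCoeff cat = 0 := by simp [cat]
    have hcst : ∀ c, PowerSeries.map Polynomial.constantCoeff (cst c) = c := by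
      intro c
      ext n
      simp [cst]
    have hB : PowerSeries.map Polynomial.constantCoeff By = G 0 0 := by rw [← cf_zero, cf_By]
    have hB1 : PowerSeries.map Polynomial.constantCoeff (shift By) = G 0 1 := by
      rw [← cf_zero, cf_shift, cf_By]
    rw [cf_zero, cf_zero, Up] at h3
    simp only [map_sub, map_mul, map_add, map_one, map_pow, map_neg, hc, hcst, hB, hB1,
      PowerSeries.map_X] at h3
    rw [xi]
    linear_combination h3
  rw [hxi]
  exact ⟨h1, h2⟩

/-! ### Differentiating and evaluating in the catalytic variable -/

/-- The derivative with respect to the catalytic variable. -/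
def dcat (f : Ser1) : Ser1 :=
  PowerSeries.mk fun n => Polynomial.derivative (PowerSeries.coeff n f)

lemma dcat_add (f h : Ser1) : dcat (f + h) = dcat f + dcat h := by
  ext1 n; simp [dcat]

lemma dcat_sub (f h : Ser1) : dcat (f - h) = dcat f - dcat h := by
  ext1 n; simp [dcat]

lemma dcat_neg (f : Ser1) : dcat (-f) = -dcat f := by
  ext1 n; simp [dcat]

lemma dcat_mul (f h : Ser1) : dcat (f * h) = dcat f * h + f * dcat h := by
  ext1 n
  simp [dcat, PowerSeries.coeff_mul, Polynomial.derivative_mul,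
    Finset.sum_add_distrib]

lemma dcat_cst (c : PowerSeries ℚ) : dcat (cst c) = 0 := by
  ext1 n; simp [dcat, cst]

lemma dcat_cat : dcat cat = 1 := by
  ext1 n
  simp only [dcat, cat, PowerSeries.coeff_mk, PowerSeries.coeff_C, PowerSeries.coeff_one]
  split_ifs <;> simp

lemma cst_X : cst PowerSeries.X = PowerSeries.X := by simp [cst]

/-- The diagonal map `R⟦t⟧⟦u⟧ → R⟦t⟧`, `u ↦ t`. -/
def diag (R : Type*) [CommRing R] : PowerSeries (PowerSeries R) →+* PowerSeries R where
  toFun F := PowerSeries.mk fun n => ∑ p ∈ Finset.HasAntidiagonal.antidiagonal n,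
    PowerSeries.coeff p.2 (PowerSeries.coeff p.1 F)
  map_zero' := by ext; simp
  map_one' := by
    ext n
    simp only [PowerSeries.coeff_mk, PowerSeries.coeff_one]
    rw [Finset.sum_eq_single (0, n)]
    · simp [PowerSeries.coeff_one]
    · rintro ⟨a, b⟩ h hne
      have ha : a ≠ 0 := by rintro rfl; simp at h; simp [h] at hne
      simp [ha]
    · simp
  map_add' F H := by ext; simp [Finset.sum_add_distrib]
  map_mul' F H := by
    ext n
    simp only [PowerSeries.coeff_mk, PowerSeries.coeff_mul, map_sum, Finset.sum_mul_sum]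
    simp only [Finset.sum_sigma']
    refine Finset.sum_nbij'
      (fun z => ⟨(z.2.1.1 + z.2.2.1, z.2.1.2 + z.2.2.2), (z.2.1.1, z.2.2.1), (z.2.1.2, z.2.2.2)⟩)
      (fun z => ⟨(z.2.1.1 + z.2.2.1, z.2.1.2 + z.2.2.2), (z.2.1.1, z.2.2.1), (z.2.1.2, z.2.2.2)⟩)
      ?_ ?_ ?_ ?_ ?_
    · rintro ⟨⟨p, q⟩, ⟨a, b⟩, ⟨c, d⟩⟩ h
      simp only [Finset.mem_sigma, Finset.HasAntidiagonal.mem_antidiagonal] at h ⊢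
      exact ⟨by omega, trivial, trivial⟩
    · rintro ⟨⟨p, q⟩, ⟨a, b⟩, ⟨c, d⟩⟩ h
      simp only [Finset.mem_sigma, Finset.HasAntidiagonal.mem_antidiagonal] at h ⊢
      exact ⟨by omega, trivial, trivial⟩
    · rintro ⟨⟨p, q⟩, ⟨a, b⟩, ⟨c, d⟩⟩ h
      simp only [Finset.mem_sigma, Finset.HasAntidiagonal.mem_antidiagonal] at h
      obtain ⟨-, rfl, rfl⟩ := h
      rfl
    · rintro ⟨⟨p, q⟩, ⟨a, b⟩, ⟨c, d⟩⟩ h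
      simp only [Finset.mem_sigma, Finset.HasAntidiagonal.mem_antidiagonal] at h
      obtain ⟨-, rfl, rfl⟩ := h
      rfl
    · rintro ⟨⟨p, q⟩, ⟨a, b⟩, ⟨c, d⟩⟩ h
      rfl

/-- Evaluation of the catalytic variable at a power series in `t`. -/
def ev (Y : PowerSeries ℚ) : Ser1 →+* PowerSeries ℚ :=
  (diag ℚ).comp (PowerSeries.map (Polynomial.aeval Y).toRingHom)

lemma ev_cat (Y : PowerSeries ℚ) : ev Y cat = Y := by
  ext n
  simp only [ev, cat, diag, RingHom.comp_apply, RingHom.coe_mk, MonoidHom.coe_mk, OneHom.coe_mk,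
    PowerSeries.coeff_mk, PowerSeries.coeff_map, PowerSeries.coeff_C]
  rw [Finset.sum_eq_single (0, n)]
  · simp
  · rintro ⟨a, b⟩ h hne
    have ha : a ≠ 0 := by rintro rfl; simp at h; simp [h] at hne
    simp [ha]
  · simp

lemma ev_cst (Y c : PowerSeries ℚ) : ev Y (cst c) = c := by
  ext n
  simp only [ev, cst, diag, RingHom.comp_apply, RingHom.coe_mk, MonoidHom.coe_mk, OneHom.coe_mk,
    PowerSeries.coeff_mk, PowerSeries.coeff_map]
  rw [Finset.sum_eq_single (n, 0)]
  · simp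
  · rintro ⟨a, b⟩ h hne
    have hb : b ≠ 0 := by rintro rfl; simp at h; simp [h] at hne
    simp [PowerSeries.coeff_C, hb]
  · simp

lemma ev_X (Y : PowerSeries ℚ) : ev Y PowerSeries.X = PowerSeries.X := by
  rw [← cst_X, ev_cst]

/-! ### Critical points of the catalytic equation -/

lemma dcat_X : dcat PowerSeries.X = 0 := by rw [← cst_X, dcat_cst]

lemma dcat_one : dcat 1 = 0 := by rw [← map_one cst, dcat_cst]

/-- The equation `P₁ P₂ = y (1 + y) ξ` for `B(y)`, and its derivative with respect to `y`, evaluated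
at an arbitrary series `Y`. -/
lemma eval_eqs (Y : PowerSeries ℚ) {β β' a μ t : PowerSeries ℚ} (hβ : β = ev Y By)
    (hβ' : β' = ev Y (dcat By)) (ha : a = G 0 0) (ht : t = PowerSeries.X)
    (hμ : μ = 2 * PowerSeries.X * G 1 0 - 2) :
    ((1 - Y) ^ 2 + Y * (1 - Y) * β + t ^ 2 * Y * (1 + Y) ^ 2 * β ^ 2 - μ * Y) *
      (-Y + t ^ 2 * (1 + Y) * ((1 + Y) * β - a)) = Y * (1 + Y) * xi ∧
    (-2 * (1 - Y) + (1 - 2 * Y) * β + Y * (1 - Y) * β' + t ^ 2 * (1 + Y) ^ 2 * β ^ 2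
        + 2 * t ^ 2 * Y * (1 + Y) * β ^ 2 + 2 * t ^ 2 * Y * (1 + Y) ^ 2 * β * β' - μ) *
      (-Y + t ^ 2 * (1 + Y) * ((1 + Y) * β - a)) +
      ((1 - Y) ^ 2 + Y * (1 - Y) * β + t ^ 2 * Y * (1 + Y) ^ 2 * β ^ 2 - μ * Y) *
      (-1 + t ^ 2 * ((1 + Y) * β - a) + t ^ 2 * (1 + Y) * (β + (1 + Y) * β')) =
      (1 + 2 * Y) * xi := by
  have h := invariants_eq.2
  have hB := eq_shift By
  rw [cf_By] at hB
  rw [Up] at h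
  have h1 : ((1 - cat) * (1 - cat) + cat * (1 - cat) * By + PowerSeries.X * PowerSeries.X * cat *
      ((1 + cat) * (1 + cat)) * (By * By) - cst μ * cat) *
      (-cat + PowerSeries.X * PowerSeries.X * (1 + cat) * ((1 + cat) * By - cst a)) =
      cat * (1 + cat) * cst xi := by
    have e : cst μ = 2 * PowerSeries.X * cst (G 1 0) - 2 := by
      simp only [hμ, map_sub, map_mul, map_ofNat, cst_X]
    rw [e, ha]
    linear_combination cat * h + ((1 - cat) ^ 2 + cat * (1 - cat) * By
      + PowerSeries.X ^ 2 * cat * (1 + cat) ^ 2 * By ^ 2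
      - (2 * PowerSeries.X * cst (G 1 0) - 2) * cat) * (PowerSeries.X ^ 2 * (1 + cat)) * hB
  have h2 := congrArg dcat h1
  simp only [dcat_add, dcat_sub, dcat_neg, dcat_mul, dcat_cst, dcat_cat, dcat_X, dcat_one] at h2
  replace h1 := congrArg (ev Y) h1
  replace h2 := congrArg (ev Y) h2
  simp only [map_add, map_sub, map_neg, map_mul, map_one, map_zero, ev_cst, ev_X, ev_cat, ← hβ,
    ← hβ', ← ht] at h1 h2
  constructor
  · linear_combination h1
  · linear_combination h2

/-- The second equation at a critical point. Here `v = 1 / (1 + Y)`, `c = t² J(Y)`, the hypothesis `hJ`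
is `J'(Y) = 0` cleared of denominators, and `u'` is the derivative of `u`. In terms of `u` the equation
for `B` reads `W (u - p) = q` with `W = c + u² - u - m`; since `c' = 0`, its derivative is
`u' ((2u - 1)(u - p) + W) = 0`. -/
lemma critical_point {R : Type*} [CommRing R] [IsDomain R] (t a μ ξ Y β β' v c : R)
    (h1 : ((1 - Y) ^ 2 + Y * (1 - Y) * β + t ^ 2 * Y * (1 + Y) ^ 2 * β ^ 2 - μ * Y) *
      (-Y + t ^ 2 * (1 + Y) * ((1 + Y) * β - a)) = Y * (1 + Y) * ξ)
    (h2 : (-2 * (1 - Y) + (1 - 2 * Y) * β + Y * (1 - Y) * β' + t ^ 2 * (1 + Y) ^ 2 * β ^ 2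
        + 2 * t ^ 2 * Y * (1 + Y) * β ^ 2 + 2 * t ^ 2 * Y * (1 + Y) ^ 2 * β * β' - μ) *
      (-Y + t ^ 2 * (1 + Y) * ((1 + Y) * β - a)) +
      ((1 - Y) ^ 2 + Y * (1 - Y) * β + t ^ 2 * Y * (1 + Y) ^ 2 * β ^ 2 - μ * Y) *
      (-1 + t ^ 2 * ((1 + Y) * β - a) + t ^ 2 * (1 + Y) * (β + (1 + Y) * β')) =
      (1 + 2 * Y) * ξ)
    (hv : (1 + Y) * v = 1) (hY : Y ≠ 0) (hc : c * Y = t ^ 2 * (1 - Y) ^ 2 + Y ^ 2 * v ^ 2)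
    (hJ : (1 - Y) * (Y ^ 2 * v ^ 3 - t ^ 2 * (1 + Y)) = 0)
    (u u' : R) (hu : u = t ^ 2 * (1 + Y) * β + v)
    (hu' : u' = t ^ 2 * (β + (1 + Y) * β') - v ^ 2) (hu0 : u' ≠ 0) :
    (c + u ^ 2 - u - t ^ 2 * μ) * (u - (1 + t ^ 2 * a)) = t ^ 2 * ξ ∧
    (2 * u - 1) * (u - (1 + t ^ 2 * a)) + (c + u ^ 2 - u - t ^ 2 * μ) = 0 := by
  have hY1 : 1 + Y ≠ 0 := left_ne_zero_of_mul_eq_one hv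
  -- This is the vanishing of the derivative of `y ↦ t² J(y)` at `Y`.
  have hc' : c = -2 * t ^ 2 * (1 - Y) + 2 * Y * v ^ 2 - 2 * Y ^ 2 * v ^ 3 := by
    apply mul_left_cancel₀ hY
    linear_combination hc - hJ + Y ^ 2 * v ^ 2 * hv
  have e1 : Y * (c + u ^ 2 - u - t ^ 2 * μ) =
      t ^ 2 * ((1 - Y) ^ 2 + Y * (1 - Y) * β + t ^ 2 * Y * (1 + Y) ^ 2 * β ^ 2 - μ * Y) := by
    subst hu; clear hu0 h1 h2 hc' hJ hu'
    grind
  have e2 : -Y + t ^ 2 * (1 + Y) * ((1 + Y) * β - a) = (1 + Y) * (u - (1 + t ^ 2 * a)) := by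
    linear_combination (-1 - Y) * hu - hv
  have e3 : t ^ 2 * (-2 * (1 - Y) + (1 - 2 * Y) * β + Y * (1 - Y) * β'
        + t ^ 2 * (1 + Y) ^ 2 * β ^ 2
        + 2 * t ^ 2 * Y * (1 + Y) * β ^ 2 + 2 * t ^ 2 * Y * (1 + Y) ^ 2 * β * β' - μ) =
      (c + u ^ 2 - u - t ^ 2 * μ) + Y * (2 * u - 1) * u' := by
    subst hu hu'; clear hu0 h1 h2 hJ e1 e2 hc
    subst hc'
    grind
  have e4 : -1 + t ^ 2 * ((1 + Y) * β - a) + t ^ 2 * (1 + Y) * (β + (1 + Y) * β') =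
      (u - (1 + t ^ 2 * a)) + (1 + Y) * u' := by
    subst hu hu'
    linear_combination v * hv
  rw [e2] at h1 h2
  rw [e4] at h2
  generalize c + u ^ 2 - u - t ^ 2 * μ = W at *
  generalize u - (1 + t ^ 2 * a) = z at *
  have f1 : W * z = t ^ 2 * ξ := by
    apply mul_left_cancel₀ (mul_ne_zero hY hY1)
    linear_combination t ^ 2 * h1 + (1 + Y) * z * e1
  refine ⟨f1, ?_⟩
  apply mul_left_cancel₀ (mul_ne_zero (mul_ne_zero hY hY1) hu0)
  linear_combination t ^ 2 * h2 - (1 + Y) * z * e3 + (z + (1 + Y) * u') * e1 - (1 + 2 * Y) * f1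

/-- The value of `u = t² (1 + y) B(y) + 1 / (1 + y)` at a critical point `Y`; the factor `u'` is
cancelled because its constant term is `-v(0)² ≠ 0`. -/
lemma exists_root (Y v c : PowerSeries ℚ) (hv : (1 + Y) * v = 1) (hY : Y ≠ 0)
    (hc : c * Y = PowerSeries.X ^ 2 * (1 - Y) ^ 2 + Y ^ 2 * v ^ 2)
    (hJ : (1 - Y) * (Y ^ 2 * v ^ 3 - PowerSeries.X ^ 2 * (1 + Y)) = 0) :
    ∃ u, PowerSeries.constantCoeff u = PowerSeries.constantCoeff v ∧
    (c + u ^ 2 - u - PowerSeries.X ^ 2 * (2 * PowerSeries.X * G 1 0 - 2)) *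
      (u - (1 + PowerSeries.X ^ 2 * G 0 0)) = PowerSeries.X ^ 2 * xi ∧
    (2 * u - 1) * (u - (1 + PowerSeries.X ^ 2 * G 0 0)) +
      (c + u ^ 2 - u - PowerSeries.X ^ 2 * (2 * PowerSeries.X * G 1 0 - 2)) = 0 := by
  obtain ⟨h1, h2⟩ := eval_eqs Y rfl rfl rfl rfl rfl
  refine ⟨_, ?_, critical_point _ _ _ _ Y _ _ v c h1 h2 hv hY hc hJ _ _ rfl rfl ?_⟩
  · simp
  · intro h
    have h0 := congrArg PowerSeries.constantCoeff h
    have hv0 := congrArg PowerSeries.constantCoeff hv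
    simp only [map_sub, map_mul, map_pow, PowerSeries.constantCoeff_X, map_zero, map_one] at h0 hv0
    have h3 : PowerSeries.constantCoeff v = 0 := by simpa using h0
    rw [h3] at hv0
    simp at hv0

/-- The solution `C` of `C = 1 + ε t C²`. -/
lemma exists_catalan (ε : ℚ) : ∃ C : PowerSeries ℚ, PowerSeries.constantCoeff C = 1 ∧
    C = 1 + PowerSeries.C ε * PowerSeries.X * C ^ 2 := by
  have h := congrArg (fun f => PowerSeries.rescale ε (PowerSeries.map (Nat.castRingHom ℚ) f))
    PowerSeries.catalanSeries_sq_mul_X_add_one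
  simp only [map_add, map_mul, map_pow, map_one, PowerSeries.map_X, PowerSeries.rescale_X] at h
  refine ⟨_, ?_, h.symm.trans (by ring)⟩
  have h0 := congrArg PowerSeries.constantCoeff h
  rw [← h0]
  simp

/-- The critical points `Y = ε t C²`, where `C = 1 + Y` is a Catalan series and `ε = ± 1`; they satisfy
`Y = ε t (1 + Y)²`, and `t² J(Y) = 2 ε t - 4 t²`. -/
lemma exists_root_catalan (ε : ℚ) (hε : ε ^ 2 = 1) :
    ∃ u, PowerSeries.constantCoeff u = 1 ∧
    (2 * PowerSeries.C ε * PowerSeries.X - 4 * PowerSeries.X ^ 2 + u ^ 2 - u -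
        PowerSeries.X ^ 2 * (2 * PowerSeries.X * G 1 0 - 2)) *
      (u - (1 + PowerSeries.X ^ 2 * G 0 0)) = PowerSeries.X ^ 2 * xi ∧
    (2 * u - 1) * (u - (1 + PowerSeries.X ^ 2 * G 0 0)) +
      (2 * PowerSeries.C ε * PowerSeries.X - 4 * PowerSeries.X ^ 2 + u ^ 2 - u -
        PowerSeries.X ^ 2 * (2 * PowerSeries.X * G 1 0 - 2)) = 0 := by
  obtain ⟨C, hC0, hC⟩ := exists_catalan ε
  have hv : C * C⁻¹ = 1 := PowerSeries.mul_inv_cancel C (by simp [hC0])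
  have he : PowerSeries.C ε ^ 2 = (1 : PowerSeries ℚ) := by rw [← map_pow, hε, map_one]
  have hv0 : PowerSeries.constantCoeff C⁻¹ = 1 := by simp [hC0]
  generalize C⁻¹ = v at hv hv0
  have hY : C - 1 ≠ 0 := by
    have e : C - 1 = PowerSeries.C ε * PowerSeries.X * C ^ 2 := by linear_combination hC
    rw [e]
    have hC' : C ≠ 0 := left_ne_zero_of_mul_eq_one hv
    have hε' : PowerSeries.C ε ≠ (0 : PowerSeries ℚ) := by
      intro h
      rw [h] at he
      simp at he
    exact mul_ne_zero (mul_ne_zero hε' PowerSeries.X_ne_zero) (pow_ne_zero _ hC')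
  generalize PowerSeries.C ε = e at *
  have hYv : (C - 1) * v ^ 2 = e * PowerSeries.X := by
    linear_combination v ^ 2 * hC + e * PowerSeries.X * (C * v + 1) * hv
  obtain ⟨u, hu, h⟩ := exists_root (C - 1) v (2 * e * PowerSeries.X - 4 * PowerSeries.X ^ 2)
    (by linear_combination hv) hY
    (by linear_combination (-(C - 1)) * hYv + e * PowerSeries.X * hC
      + PowerSeries.X ^ 2 * C ^ 2 * he)
    (by
      have h1 : (C - 1) ^ 2 * v ^ 4 = PowerSeries.X ^ 2 := by
        linear_combination ((C - 1) * v ^ 2 + e * PowerSeries.X) * hYv + PowerSeries.X ^ 2 * he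
      linear_combination (2 - C) * (C * h1 - (C - 1) ^ 2 * v ^ 3 * hv))
  exact ⟨u, hu.trans hv0, h⟩

/-- Three critical points determine the unknown series: elimination in the three instances of the
pair of equations `W (u - p) = q`, `(2u - 1)(u - p) + W = 0`, where `W = c + u² - u - m`. The `uᵢ` are
the three roots of the cubic `(2u - 1)(u - p)² + q`. -/
lemma elimination {R : Type*} [CommRing R] [IsDomain R] (t m p q u₁ u₂ u₃ c₁ c₂ c₃ : R)
    (hc₁ : 4 * c₁ = 1) (hc₂ : c₂ = 2 * t - 4 * t ^ 2) (hc₃ : c₃ = -2 * t - 4 * t ^ 2)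
    (h₁ : (c₁ + u₁ ^ 2 - u₁ - m) * (u₁ - p) = q)
    (h₁' : (2 * u₁ - 1) * (u₁ - p) + (c₁ + u₁ ^ 2 - u₁ - m) = 0)
    (h₂ : (c₂ + u₂ ^ 2 - u₂ - m) * (u₂ - p) = q)
    (h₂' : (2 * u₂ - 1) * (u₂ - p) + (c₂ + u₂ ^ 2 - u₂ - m) = 0)
    (h₃ : (c₃ + u₃ ^ 2 - u₃ - m) * (u₃ - p) = q)
    (h₃' : (2 * u₃ - 1) * (u₃ - p) + (c₃ + u₃ ^ 2 - u₃ - m) = 0)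
    (h₁₂ : u₁ ≠ u₂) (h₁₃ : u₁ ≠ u₃) (h₂₃ : u₂ ≠ u₃) (a k : R) (ha : a = 2 * u₁ - 1)
    (hk : k = 4 * (2 * p - 1) - 3 * a) :
    a * k ^ 3 = 256 * t ^ 2 ∧ 256 * t ^ 2 + 16 + 27 * a ^ 2 - 18 * a * k - k ^ 2 = 0 := by
  have f₁ : (2 * u₁ - 1) * (u₁ - p) ^ 2 + q = 0 := by linear_combination (u₁ - p) * h₁' - h₁
  have f₂ : (2 * u₂ - 1) * (u₂ - p) ^ 2 + q = 0 := by linear_combination (u₂ - p) * h₂' - h₂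
  have f₃ : (2 * u₃ - 1) * (u₃ - p) ^ 2 + q = 0 := by linear_combination (u₃ - p) * h₃' - h₃
  -- The divided differences of the cubic vanish.
  have d₁₂ : 2 * (u₁ ^ 2 + u₁ * u₂ + u₂ ^ 2) - (1 + 4 * p) * (u₁ + u₂) + 2 * p ^ 2 + 2 * p = 0 := by
    apply mul_left_cancel₀ (sub_ne_zero.2 h₁₂)
    linear_combination f₁ - f₂
  have d₁₃ : 2 * (u₁ ^ 2 + u₁ * u₃ + u₃ ^ 2) - (1 + 4 * p) * (u₁ + u₃) + 2 * p ^ 2 + 2 * p = 0 := by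
    apply mul_left_cancel₀ (sub_ne_zero.2 h₁₃)
    linear_combination f₁ - f₃
  have s : 2 * (u₁ + u₂ + u₃) = 1 + 4 * p := by
    apply mul_left_cancel₀ (sub_ne_zero.2 h₂₃)
    linear_combination d₁₂ - d₁₃
  subst ha hk hc₂ hc₃
  have hd : 4 * (u₂ - u₃) ^ 2 = (2 * u₁ - 1) * (4 * (2 * p - 1) - 3 * (2 * u₁ - 1)) := by
    linear_combination (2 * (u₁ + u₂ + u₃) - (1 + 4 * p) - 2 * (4 * u₂ + 2 * u₁ - 1 - 4 * p)) * s
      + 8 * d₁₂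
  have ht : (u₂ - u₃) * (4 * (2 * p - 1) - 3 * (2 * u₁ - 1)) = -8 * t := by
    linear_combination 2 * (h₂' - h₃') - 3 * (u₂ - u₃) * s
  constructor
  · linear_combination (-(4 * (2 * p - 1) - 3 * (2 * u₁ - 1)) ^ 2) * hd +
      4 * ((u₂ - u₃) * (4 * (2 * p - 1) - 3 * (2 * u₁ - 1)) - 8 * t) * ht
  · linear_combination (-32) * (h₂' + h₃' - 2 * h₁') - 16 * hc₁ +
      (24 * (1 + 4 * p - 2 * u₁ - 2 * u₂ + 2 * u₃) - 16 * (2 + 2 * p)) * s + 96 * d₁₂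

/-! ### Algebraicity of the boundary series at the origin -/

/-- The algebraic power series. -/
def Alg : Subalgebra (Polynomial ℚ) (PowerSeries ℚ) :=
  Subalgebra.algebraicClosure (Polynomial ℚ) (PowerSeries ℚ)

lemma mem_Alg {f : PowerSeries ℚ} : f ∈ Alg ↔ IsAlgebraic (Polynomial ℚ) f := Iff.rfl

lemma algebraMap_eq : algebraMap (Polynomial ℚ) (PowerSeries ℚ) =
    Polynomial.coeToPowerSeries.ringHom := by
  ext n
  · simp [PowerSeries.algebraMap_apply']
  · simp [PowerSeries.algebraMap_apply']

/-- Algebraic series are closed under division. -/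
lemma Alg_of_mul {y z : PowerSeries ℚ} (hy : y ∈ Alg) (h0 : y ≠ 0) (h : y * z ∈ Alg) : z ∈ Alg :=
  IsAlgebraic.of_mul (mem_nonZeroDivisors_of_ne_zero h0) hy h

lemma X_mem_Alg : (PowerSeries.X : PowerSeries ℚ) ∈ Alg := by
  have h := Alg.algebraMap_mem Polynomial.X
  rwa [algebraMap_eq, Polynomial.coeToPowerSeries.ringHom_apply, Polynomial.coe_X] at h

instance : CharZero (PowerSeries ℚ) := algebraRat.charZero _

/-- The octic equation satisfied by `k` in the elimination. -/
lemma octic_mem_Alg (k : PowerSeries ℚ)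
    (h : k ^ 8 - (256 * PowerSeries.X ^ 2 + 16) * k ^ 6 + 4608 * PowerSeries.X ^ 2 * k ^ 4
      - 1769472 * PowerSeries.X ^ 4 = 0) : k ∈ Alg := by
  refine ⟨Polynomial.X ^ 8 - Polynomial.C (256 * Polynomial.X ^ 2 + 16) * Polynomial.X ^ 6 +
    Polynomial.C (4608 * Polynomial.X ^ 2) * Polynomial.X ^ 4 -
    Polynomial.C (1769472 * Polynomial.X ^ 4), fun h0 => ?_, ?_⟩
  · have h1 := congrArg (fun P => Polynomial.coeff P 8) h0
    simp only [Polynomial.coeff_sub, Polynomial.coeff_add, Polynomial.coeff_C_mul,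
      Polynomial.coeff_X_pow, Polynomial.coeff_C, Polynomial.coeff_zero] at h1
    norm_num at h1
  · rw [← h, Polynomial.aeval_def, algebraMap_eq]
    simp only [Polynomial.eval₂_sub, Polynomial.eval₂_add, Polynomial.eval₂_mul,
      Polynomial.eval₂_pow, Polynomial.eval₂_X, Polynomial.eval₂_C,
      Polynomial.eval₂_ofNat, map_add, map_mul, map_pow,
      map_ofNat, Polynomial.coeToPowerSeries.ringHom_apply, Polynomial.coe_X]

/-- The three unknown series in the equation for `B(y)` are algebraic: elimination between the critical
points `y = 1` (where `t² J = 1/4`) and `y = ± t (1 + y)²`. The values of `u` there are distinct, as seen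
from their constant terms `1/2, 1, 1` and from the two different values of `J`. -/
lemma base_mem_Alg : G 0 0 ∈ Alg ∧ G 1 0 ∈ Alg ∧ xi ∈ Alg := by
  have hhalf : PowerSeries.C (1 / 2 : ℚ) * 2 = (1 : PowerSeries ℚ) := by
    rw [← map_ofNat PowerSeries.C 2, ← map_mul]; norm_num
  have hsq : PowerSeries.C (1 / 4 : ℚ) = (PowerSeries.C (1 / 2 : ℚ)) ^ 2 := by
    rw [← map_pow]; norm_num
  have hquarter : 4 * PowerSeries.C (1 / 4 : ℚ) = (1 : PowerSeries ℚ) := by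
    rw [← map_ofNat PowerSeries.C 4, ← map_mul]; norm_num
  obtain ⟨u₁, hu₁, h₁, h₁'⟩ := exists_root 1 (PowerSeries.C (1 / 2)) (PowerSeries.C (1 / 4))
    (by linear_combination hhalf) one_ne_zero
    (by linear_combination hsq) (by ring)
  obtain ⟨u₂, hu₂, h₂, h₂'⟩ := exists_root_catalan 1 (by norm_num)
  obtain ⟨u₃, hu₃, h₃, h₃'⟩ := exists_root_catalan (-1) (by norm_num)
  rw [PowerSeries.constantCoeff_C] at hu₁
  have h₁₂ : u₁ ≠ u₂ := by rintro rfl; rw [hu₁] at hu₂; norm_num at hu₂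
  have h₁₃ : u₁ ≠ u₃ := by rintro rfl; rw [hu₁] at hu₃; norm_num at hu₃
  simp only [map_neg, map_one] at h₂ h₂' h₃ h₃'
  have h₂₃ : u₂ ≠ u₃ := by
    rintro rfl
    have h4 : (4 : PowerSeries ℚ) * PowerSeries.X = 0 := by linear_combination h₂' - h₃'
    exact mul_ne_zero (by norm_num) PowerSeries.X_ne_zero h4
  have hX : (PowerSeries.X : PowerSeries ℚ) ≠ 0 := PowerSeries.X_ne_zero
  have hXA := X_mem_Alg
  generalize hμ : 2 * PowerSeries.X * G 1 0 - 2 = μ at *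
  generalize hp : 1 + PowerSeries.X ^ 2 * G 0 0 = p at *
  obtain ⟨e₁, e₂⟩ := elimination PowerSeries.X _ _ _ u₁ u₂ u₃ _ _ _ hquarter (by ring) (by ring)
    h₁ h₁' h₂ h₂' h₃ h₃' h₁₂ h₁₃ h₂₃ _ _ rfl rfl
  generalize PowerSeries.C (1 / 4 : ℚ) = c at *
  clear h₂ h₂' h₃ h₃' hu₁ hu₂ hu₃ h₁₂ h₁₃ h₂₃
  obtain ⟨k, hk⟩ : ∃ k, k = 4 * (2 * p - 1) - 3 * (2 * u₁ - 1) := ⟨_, rfl⟩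
  rw [← hk] at e₁ e₂
  have hkA : k ∈ Alg := octic_mem_Alg k (by
    linear_combination (-k ^ 6) * e₂ + (27 * ((2 * u₁ - 1) * k ^ 3 + 256 * PowerSeries.X ^ 2)
      - 18 * k ^ 4) * e₁)
  have hk0 : k ≠ 0 := by
    rintro rfl
    have h0 : (256 : PowerSeries ℚ) * PowerSeries.X ^ 2 = 0 := by linear_combination -e₁
    exact mul_ne_zero (by norm_num) (pow_ne_zero 2 hX) h0
  have haA : 2 * u₁ - 1 ∈ Alg := Alg_of_mul (pow_mem hkA 3) (pow_ne_zero 3 hk0) (by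
    rw [mul_comm, e₁]
    exact mul_mem (ofNat_mem _ _) (pow_mem hXA 2))
  have huA : u₁ ∈ Alg := Alg_of_mul (ofNat_mem Alg 2) (by norm_num) (by
    simpa using add_mem haA (one_mem Alg))
  have hpA : p ∈ Alg := Alg_of_mul (ofNat_mem Alg 8) (by norm_num) (by
    have e : 8 * p = k + 3 * (2 * u₁ - 1) + 4 := by rw [hk]; ring
    rw [e]
    exact add_mem (add_mem hkA (mul_mem (ofNat_mem Alg 3) haA)) (ofNat_mem Alg 4))
  have hcA : c ∈ Alg := Alg_of_mul (ofNat_mem Alg 4) (by norm_num) (by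
    rw [hquarter]; exact one_mem _)
  have hX2 : (PowerSeries.X : PowerSeries ℚ) ^ 2 ∈ Alg := pow_mem hXA 2
  have hX20 : (PowerSeries.X : PowerSeries ℚ) ^ 2 ≠ 0 := pow_ne_zero 2 hX
  have hupA : u₁ - p ∈ Alg := sub_mem huA hpA
  have hμA : μ ∈ Alg := Alg_of_mul hX2 hX20 (by
    have e : PowerSeries.X ^ 2 * μ = (2 * u₁ - 1) * (u₁ - p) + (c + u₁ ^ 2 - u₁) := by
      linear_combination -h₁'
    rw [e]
    exact add_mem (mul_mem haA hupA) (sub_mem (add_mem hcA (pow_mem huA 2)) huA))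
  refine ⟨Alg_of_mul hX2 hX20 ?_, Alg_of_mul (mul_mem (ofNat_mem Alg 2) hXA)
    (mul_ne_zero (by norm_num) hX) ?_, Alg_of_mul hX2 hX20 ?_⟩
  · have e : PowerSeries.X ^ 2 * G 0 0 = p - 1 := by rw [← hp]; ring
    rw [e]
    exact sub_mem hpA (one_mem _)
  · have e : 2 * PowerSeries.X * G 1 0 = μ + 2 := by rw [← hμ]; ring
    rw [e]
    exact add_mem hμA (ofNat_mem Alg 2)
  · rw [← h₁]
    exact mul_mem (sub_mem (sub_mem (add_mem hcA (pow_mem huA 2)) huA) (mul_mem hX2 hμA)) hupA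

/-! ### Algebraicity of all the coefficients -/

lemma cf_mul (k : ℕ) (f h : Ser1) :
    cf k (f * h) = ∑ p ∈ Finset.HasAntidiagonal.antidiagonal k, cf p.1 f * cf p.2 h := by
  ext n
  simp only [cf, PowerSeries.coeff_mk, PowerSeries.coeff_mul, Polynomial.finsetSum_coeff,
    Polynomial.coeff_mul, map_sum]
  rw [Finset.sum_comm]

lemma cf_cst_mul (k : ℕ) (c : PowerSeries ℚ) (f : Ser1) : cf k (cst c * f) = c * cf k f := by
  ext n
  simp [cf, cst, PowerSeries.coeff_mul]

/-- The series whose coefficients of index `< n` in the catalytic variable are algebraic. -/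
def lowAlg (n : ℕ) : Subring Ser1 where
  carrier := {f | ∀ k < n, cf k f ∈ Alg}
  zero_mem' k _ := by
    have e : cf k 0 = 0 := by ext; simp [cf]
    rw [e]; exact zero_mem _
  one_mem' k _ := by
    have e : cf k 1 = if k = 0 then 1 else 0 := by
      ext n
      rcases n with _ | n <;> rcases k with _ | k <;>
        simp [cf, PowerSeries.coeff_one, Polynomial.coeff_one]
    rw [e]
    split_ifs
    exacts [one_mem _, zero_mem _]
  add_mem' {f h} hf hh k hk := by
    have e : cf k (f + h) = cf k f + cf k h := by ext; simp [cf]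
    rw [e]; exact add_mem (hf k hk) (hh k hk)
  neg_mem' {f} hf k hk := by
    have e : cf k (-f) = -cf k f := by ext; simp [cf]
    rw [e]; exact neg_mem (hf k hk)
  mul_mem' {f h} hf hh k hk := by
    rw [cf_mul]
    refine sum_mem fun p hp => ?_
    rw [Finset.HasAntidiagonal.mem_antidiagonal] at hp
    exact mul_mem (hf _ (by omega)) (hh _ (by omega))

lemma mem_lowAlg {n : ℕ} {f : Ser1} : f ∈ lowAlg n ↔ ∀ k < n, cf k f ∈ Alg := Iff.rfl

lemma lowAlg_mono {n m : ℕ} (h : n ≤ m) : lowAlg m ≤ lowAlg n :=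
  fun _ hf k hk => hf k (hk.trans_le h)

lemma mem_lowAlg_succ {n : ℕ} {f : Ser1} :
    f ∈ lowAlg (n + 1) ↔ cf 0 f ∈ Alg ∧ shift f ∈ lowAlg n := by
  constructor
  · intro h
    exact ⟨h 0 n.succ_pos, fun k hk => by rw [cf_shift]; exact h _ (by omega)⟩
  · rintro ⟨h0, h⟩ (_ | k) hk
    · exact h0
    · rw [← cf_shift]; exact h k (by omega)

lemma cat_mul_mem {n : ℕ} {f : Ser1} (hf : f ∈ lowAlg n) : cat * f ∈ lowAlg (n + 1) := by
  rintro (_ | k) hk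
  · have e : cf 0 (cat * f) = 0 := by ext; simp [cf, cat]
    rw [e]; exact zero_mem _
  · have e : cf (k + 1) (cat * f) = cf k f := by ext; simp [cf, cat]
    rw [e]; exact hf k (by omega)

lemma cst_mem {c : PowerSeries ℚ} (hc : c ∈ Alg) (n : ℕ) : cst c ∈ lowAlg n := by
  intro k _
  rw [← mul_one (cst c), cf_cst_mul]
  exact mul_mem hc ((lowAlg (k + 1)).one_mem k (by omega))

lemma of_cst_mul_mem {c : PowerSeries ℚ} (hc : c ∈ Alg) (h0 : c ≠ 0) {n : ℕ} {f : Ser1}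
    (h : cst c * f ∈ lowAlg n) : f ∈ lowAlg n := by
  intro k hk
  have := h k hk
  rw [cf_cst_mul] at this
  exact Alg_of_mul hc h0 this

lemma X_mem_lowAlg (n : ℕ) : (PowerSeries.X : Ser1) ∈ lowAlg n := by
  rw [← cst_X]; exact cst_mem X_mem_Alg n

lemma cat_mem_lowAlg (n : ℕ) : cat ∈ lowAlg n := by
  have h := lowAlg_mono n.le_succ (cat_mul_mem (one_mem (lowAlg n)))
  rwa [mul_one] at h

/-- Algebraicity of the `G 0 j`. With `V = B + (B - a) / y`, the equation for `B` takes the form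
`t² V = (1 - y)² + (1 + y) ξ + y (⋯)`, so the coefficients of `V` in `y` are determined one by one. -/
lemma By_mem_lowAlg (n : ℕ) : By ∈ lowAlg (n + 1) := by
  obtain ⟨hG, hG', hxi⟩ := base_mem_Alg
  induction n with
  | zero =>
    intro k hk
    rw [cf_By]
    obtain rfl : k = 0 := by omega
    exact hG
  | succ n ih =>
    refine mem_lowAlg_succ.2 ⟨by rw [cf_By]; exact hG, ?_⟩
    have hB := lowAlg_mono n.le_succ ih
    have hB1 := (mem_lowAlg_succ.1 ih).2
    have hX := X_mem_lowAlg n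
    have hy := cat_mem_lowAlg n
    have h1 := one_mem (lowAlg n)
    have h := invariants_eq.2
    obtain ⟨V, hV⟩ : ∃ V, V = By + shift By := ⟨_, rfl⟩
    obtain ⟨W, hW⟩ : ∃ W, W = (1 - cat) * By + PowerSeries.X ^ 2 * (1 + cat) ^ 2 * By ^ 2 -
      cst (2 * PowerSeries.X * G 1 0 - 2) := ⟨_, rfl⟩
    have hVm : V ∈ lowAlg n := by rw [hV]; exact add_mem hB hB1
    have hWm : W ∈ lowAlg n := by
      rw [hW]
      exact sub_mem (add_mem (mul_mem (sub_mem h1 hy) hB)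
        (mul_mem (mul_mem (pow_mem hX 2) (pow_mem (add_mem h1 hy) 2)) (pow_mem hB 2)))
        (cst_mem (sub_mem (mul_mem (mul_mem (ofNat_mem Alg 2) X_mem_Alg) hG') (ofNat_mem Alg 2)) n)
    have e : cst (PowerSeries.X ^ 2) * V = (1 - cat) ^ 2 + (1 + cat) * cst xi +
        cat * (W * (1 - PowerSeries.X ^ 2 * (1 + cat) * V) -
          PowerSeries.X ^ 2 * V * (cat ^ 2 - cat - 1)) := by
      rw [Up, ← hV] at h
      simp only [map_sub, map_mul, map_ofNat, cst_X] at hW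
      rw [map_pow, cst_X]
      linear_combination h - cat * (1 - PowerSeries.X ^ 2 * (1 + cat) * V) * hW
    have hV' : V ∈ lowAlg (n + 1) := by
      refine of_cst_mul_mem (pow_mem X_mem_Alg 2) (pow_ne_zero 2 PowerSeries.X_ne_zero) ?_
      rw [e]
      have hy' := cat_mem_lowAlg (n + 1)
      have h1' := one_mem (lowAlg (n + 1))
      refine add_mem (add_mem (pow_mem (sub_mem h1' hy') 2)
        (mul_mem (add_mem h1' hy') (cst_mem hxi _))) (cat_mul_mem (sub_mem (mul_mem hWm
          (sub_mem h1 (mul_mem (mul_mem (pow_mem hX 2) (add_mem h1 hy)) hVm)))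
          (mul_mem (mul_mem (pow_mem hX 2) hVm) (sub_mem (sub_mem (pow_mem hy 2) hy) h1))))
    have e2 : shift By = V - By := by rw [hV]; ring
    rw [e2]
    exact sub_mem hV' ih

/-- Algebraicity of the `G i 0`. With `A₁ = (A - a) / x` and `A₂ = (A₁ - b) / x`, the invariant in `x` gives
`2 t² A₂ = -ξ + t A₁ - 1 + x (⋯)`, so the coefficients of `A` in `x` are determined one by one. -/
lemma Ax_mem_lowAlg (n : ℕ) : Ax ∈ lowAlg (n + 2) := by
  obtain ⟨hG, hG', hxi⟩ := base_mem_Alg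
  induction n with
  | zero =>
    intro k hk
    rw [cf_Ax]
    obtain rfl | rfl : k = 0 ∨ k = 1 := by omega
    exacts [hG, hG']
  | succ n ih =>
    refine mem_lowAlg_succ.2 ⟨by rw [cf_Ax]; exact hG, mem_lowAlg_succ.2
      ⟨by rw [cf_shift, cf_Ax]; exact hG', ?_⟩⟩
    have hA := lowAlg_mono (Nat.le_add_right n 2) ih
    have hA1' := (mem_lowAlg_succ.1 ih).2
    have hA1 := lowAlg_mono n.le_succ hA1'
    have hA2 := (mem_lowAlg_succ.1 hA1').2
    have hX := X_mem_lowAlg n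
    have hx := cat_mem_lowAlg n
    have h1 := one_mem (lowAlg n)
    have hX' := X_mem_lowAlg (n + 1)
    have h := invariants_eq.1
    rw [Xi] at h
    obtain ⟨Z, hZ⟩ : ∃ Z, Z = 2 * PowerSeries.X ^ 2 * shift (shift Ax) - PowerSeries.X * shift Ax
      + PowerSeries.X ^ 3 * cat * shift Ax ^ 2 + 1 - PowerSeries.X * cat := ⟨_, rfl⟩
    rw [← hZ] at h
    have hZm : Z ∈ lowAlg n := by
      rw [hZ]
      exact sub_mem (add_mem (add_mem (sub_mem (mul_mem (mul_mem (ofNat_mem _ 2) (pow_mem hX 2))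
        hA2) (mul_mem hX hA1)) (mul_mem (mul_mem (pow_mem hX 3) hx) (pow_mem hA1 2))) h1)
        (mul_mem hX hx)
    refine of_cst_mul_mem (mul_mem (ofNat_mem Alg 2) (pow_mem X_mem_Alg 2))
      (mul_ne_zero (by norm_num) (pow_ne_zero 2 PowerSeries.X_ne_zero)) ?_
    have e : cst (2 * PowerSeries.X ^ 2) * shift (shift Ax) =
        -cst xi + PowerSeries.X * shift Ax - 1 + cat * (PowerSeries.X -
          PowerSeries.X ^ 3 * shift Ax ^ 2 - PowerSeries.X * Ax * Z) := by
      rw [map_mul, map_pow, map_ofNat, cst_X]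
      linear_combination -h - hZ
    rw [e]
    exact add_mem (sub_mem (add_mem (neg_mem (cst_mem hxi _)) (mul_mem hX' hA1')) (one_mem _))
      (cat_mul_mem (sub_mem (sub_mem hX (mul_mem (pow_mem hX 3) (pow_mem hA1 2)))
        (mul_mem (mul_mem hX hA) hZm)))

lemma G_zero_right_mem (i : ℕ) : G i 0 ∈ Alg := by
  rw [← cf_Ax]; exact Ax_mem_lowAlg i i (by omega)

lemma G_zero_left_mem (j : ℕ) : G 0 j ∈ Alg := by
  rw [← cf_By]; exact By_mem_lowAlg j j (by omega)

lemma G_rec_zero_zero : G 0 0 = 1 + PowerSeries.X * (G 1 0 + G 1 1) := by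
  ext n
  rcases n with _ | n <;>
    simp [coeff_G, gq_zero, gq_succ_zero_zero, PowerSeries.coeff_one, PowerSeries.coeff_succ_X_mul]

lemma G_rec_zero_succ (j : ℕ) : G 0 (j + 1) = PowerSeries.X * (G 1 (j + 1) + G 1 (j + 2)) := by
  ext n
  rcases n with _ | n <;>
    simp [coeff_G, gq_zero, gq_succ_zero_succ, PowerSeries.coeff_succ_X_mul]

lemma G_rec_succ_zero (i : ℕ) :
    G (i + 1) 0 = PowerSeries.X * (G (i + 2) 0 + G i 0 + G (i + 2) 1) := by
  ext n
  rcases n with _ | n <;>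
    simp [coeff_G, gq_zero, gq_succ_succ_zero, PowerSeries.coeff_succ_X_mul]

lemma G_rec_succ_succ (i j : ℕ) : G (i + 1) (j + 1) =
    PowerSeries.X * (G (i + 2) (j + 1) + G i (j + 1) + G (i + 2) (j + 2) + G i j) := by
  ext n
  rcases n with _ | n <;>
    simp [coeff_G, gq_zero, gq_succ_succ_succ, PowerSeries.coeff_succ_X_mul]

/-- The recursion for walks expresses `G (i + 2) (j + 2)` through smaller values of `i`, then of `j`. -/
lemma G_mem_Alg (i j : ℕ) : G i j ∈ Alg := by
  have hX : (PowerSeries.X : PowerSeries ℚ) ≠ 0 := PowerSeries.X_ne_zero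
  have hcancel : ∀ f : PowerSeries ℚ, PowerSeries.X * f ∈ Alg → f ∈ Alg := fun f hf =>
    Alg_of_mul X_mem_Alg hX hf
  have h0 := G_zero_right_mem
  induction i using Nat.strong_induction_on generalizing j with
  | _ i ih =>
  rcases i with _ | _ | i
  · exact G_zero_left_mem j
  · induction j with
    | zero => exact h0 1
    | succ j ihj =>
      rcases j with _ | j
      · have h := hcancel (G 1 0 + G 1 1) (by
          have e : PowerSeries.X * (G 1 0 + G 1 1) = G 0 0 - 1 := by rw [G_rec_zero_zero]; ring
          rw [e]
          exact sub_mem (h0 0) (one_mem _))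
        simpa using sub_mem h ihj
      · have h := hcancel (G 1 (j + 1) + G 1 (j + 2)) (by
          rw [← G_rec_zero_succ]
          exact G_zero_left_mem _)
        simpa using sub_mem h ihj
  · induction j with
    | zero => exact h0 _
    | succ j ihj =>
      rcases j with _ | j
      · have h := hcancel _ (by rw [← G_rec_succ_zero i]; exact h0 _)
        have e : G (i + 2) 1 = (G (i + 2) 0 + G i 0 + G (i + 2) 1) - G (i + 2) 0 - G i 0 := by ring
        rw [e]
        exact sub_mem (sub_mem h ihj) (h0 _)
      · have h := hcancel _ (by rw [← G_rec_succ_succ i j]; exact ih _ (by omega) _)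
        have e : G (i + 2) (j + 2) = (G (i + 2) (j + 1) + G i (j + 1) + G (i + 2) (j + 2) + G i j)
          - G (i + 2) (j + 1) - G i (j + 1) - G i j := by ring
        rw [e]
        exact sub_mem (sub_mem (sub_mem h ihj) (ih _ (by omega) _)) (ih _ (by omega) _)

/-- For every fixed endpoint `(i,j) ∈ ℕ²`, the series `G_{i,j}(t) = ∑ g(n;i,j) tⁿ`
is algebraic. -/
theorem gessel_fixed_endpoint_algebraic (i j : ℕ) :
    ∃ P : Polynomial (Polynomial ℚ), P ≠ 0 ∧
      Polynomial.eval₂ Polynomial.coeToPowerSeries.ringHom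
        (PowerSeries.mk fun n => (g n i j : ℚ)) P = 0 := by
  obtain ⟨P, hP, h⟩ := mem_Alg.1 (G_mem_Alg i j)
  refine ⟨P, hP, ?_⟩
  rw [Polynomial.aeval_def, algebraMap_eq] at h
  exact h
end
end

section
/- The complete generating function of Kreweras walks F(t;x,y) = Σ_{n≥0} (Σ_{i,j≥0} f(n;i,j) xⁱ yʲ) tⁿ, regarded as a formal power series in the three variables t, x, y over ℚ, is algebraic: there exists a nonzero polynomial P(T,t,x,y) ∈ ℚ[T,t,x,y] such that P(F(t;x,y), t, x, y) = 0. -/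
/-!
Removing the last step of a walk (`f_succ`) gives the functional equation
`K * F = x * y - R(x) - R(y)`, where `K = x * y - t * (x + y + x² * y²)` is the kernel and
`R(x) = t * x * F(t; x, 0)`. Conversely (`eq_krewerasGF`), any power series `G` such that
`K * G - x * y` is the sum of a series without `y` and a series without `x` must be `F`: its
coefficients satisfy the same recurrence as the numbers of walks. It therefore suffices to exhibit
such a `G` for which the two series are algebraic, since then `K * F`, and so `F`, is algebraic.

Let `W = t * (2 + W ^ 3)` and `R(x) = 1 / (2 * t) - 1 / x - A(x)` with
`A(x) = (1 / W - 1 / x) * √(1 - x * W ^ 2)`. Then `x * y - R(x) - R(y) = A(x) + A(y) - K / (t * x * y)`,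
so the point is that `K` divides this numerator among power series. The rational invariant
`I(x) = 1 / x ^ 2 - x - 1 / (t * x)` differs from `A(x) ^ 2` by a series in `t` alone, and
`I(x) - I(y)` is a multiple of `K`; hence `K` divides `(A(x) - A(y)) * (A(x) + A(y))`. The factor
`A(x) - A(y)` is `x - y` times a monomial times a unit, which gives the quotient in closed form. In
`exists_solution` this is carried out without poles, by writing `√(1 - x * W ^ 2)` as
`1 - x * W ^ 2 * c` with `2 * c = 1 + x * W ^ 2 * c ^ 2`. The series `W` and `c` exist by a
contraction argument (`exists_fixed`), which also controls the variables they involve.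
-/


noncomputable section

/-- The set of admissible steps for Kreweras walks. -/
def krewerasSteps : Set (ℤ × ℤ) := {(-1, 0), (0, -1), (1, 1)}

/-- `w` is a Kreweras walk: every step is admissible and the walk (which starts
at the origin) never leaves the first quadrant. -/
def IsKrewerasWalk {n : ℕ} (w : Fin n → ℤ × ℤ) : Prop :=
  (∀ m, w m ∈ krewerasSteps) ∧ ∀ k ≤ n, 0 ≤ (walkPos w k).1 ∧ 0 ≤ (walkPos w k).2

/-- The number of Kreweras walks of length `n` ending at `(i, j)`. -/
def f (n : ℕ) (i j : ℤ) : ℕ :=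
  Nat.card {w : Fin n → ℤ × ℤ // IsKrewerasWalk w ∧ walkPos w n = (i, j)}

/-- The complete generating function `F(t;x,y)` of Kreweras walks, as a formal
power series in the three variables `t = 0`, `x = 1`, `y = 2`: the coefficient
of `t^n x^i y^j` is `f(n;i,j)`. -/
def KrewerasGF : MvPowerSeries (Fin 3) ℚ := fun e => (f (e 0) (e 1) (e 2) : ℚ)

/-! ### The recurrence for Kreweras walks -/

/-- The Kreweras walks of length `n` ending at `p`. -/
def walksTo (n : ℕ) (p : ℤ × ℤ) : Set (Fin n → ℤ × ℤ) :=
  {w | IsKrewerasWalk w ∧ walkPos w n = p}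

lemma f_eq_ncard (n : ℕ) (i j : ℤ) : f n i j = (walksTo n (i, j)).ncard := rfl

lemma walkPos_eq_sum {n : ℕ} (w : Fin n → ℤ × ℤ) (k : ℕ) :
    walkPos w k = ∑ m : Fin n, if (m : ℕ) < k then w m else 0 := by
  rw [walkPos, Finset.sum_filter]

lemma walkPos_snoc_of_le {n : ℕ} (w : Fin n → ℤ × ℤ) (s : ℤ × ℤ) {k : ℕ} (hk : k ≤ n) :
    walkPos (Fin.snoc w s : Fin (n + 1) → ℤ × ℤ) k = walkPos w k := by
  rw [walkPos_eq_sum, walkPos_eq_sum, Fin.sum_univ_castSucc]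
  simp [Nat.not_lt.2 hk]

lemma walkPos_snoc_last {n : ℕ} (w : Fin n → ℤ × ℤ) (s : ℤ × ℤ) :
    walkPos (Fin.snoc w s : Fin (n + 1) → ℤ × ℤ) (n + 1) = walkPos w n + s := by
  rw [walkPos_eq_sum, walkPos_eq_sum, Fin.sum_univ_castSucc]
  simp

lemma isKrewerasWalk_snoc {n : ℕ} (w : Fin n → ℤ × ℤ) (s : ℤ × ℤ) :
    IsKrewerasWalk (Fin.snoc w s : Fin (n + 1) → ℤ × ℤ) ↔
      IsKrewerasWalk w ∧ s ∈ krewerasSteps ∧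
        0 ≤ (walkPos w n + s).1 ∧ 0 ≤ (walkPos w n + s).2 := by
  unfold IsKrewerasWalk
  constructor
  · rintro ⟨h1, h2⟩
    refine ⟨⟨fun m => by simpa using h1 m.castSucc, fun k hk => ?_⟩, by simpa using h1 (Fin.last n),
      ?_⟩
    · rw [← walkPos_snoc_of_le w s hk]
      exact h2 k (by omega)
    · rw [← walkPos_snoc_last]
      exact h2 (n + 1) le_rfl
  · rintro ⟨⟨h1, h2⟩, h3, h4⟩
    refine ⟨fun m => ?_, fun k hk => ?_⟩
    · induction m using Fin.lastCases with
      | last => simpa using h3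
      | cast m => simpa using h1 m
    · rcases Nat.lt_or_ge n k with h | h
      · obtain rfl : k = n + 1 := by omega
        rw [walkPos_snoc_last]
        exact h4
      · rw [walkPos_snoc_of_le w s h]
        exact h2 k h

lemma walksTo_finite (n : ℕ) (p : ℤ × ℤ) : (walksTo n p).Finite := by
  have hs : krewerasSteps.Finite := by simp [krewerasSteps]
  refine (Set.Finite.pi' (fun _ : Fin n => hs)).subset ?_
  rintro w ⟨hw, -⟩
  exact hw.1

lemma walksTo_eq_empty {n : ℕ} {p : ℤ × ℤ} (hp : ¬ (0 ≤ p.1 ∧ 0 ≤ p.2)) : walksTo n p = ∅ := by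
  ext w
  simp only [Set.mem_empty_iff_false, iff_false]
  rintro ⟨hw, rfl⟩
  exact hp (hw.2 n le_rfl)

lemma snoc_mem_walksTo {n : ℕ} {p : ℤ × ℤ} (hp : 0 ≤ p.1 ∧ 0 ≤ p.2)
    (w : Fin n → ℤ × ℤ) (s : ℤ × ℤ) :
    (Fin.snoc w s : Fin (n + 1) → ℤ × ℤ) ∈ walksTo (n + 1) p ↔
      s ∈ krewerasSteps ∧ w ∈ walksTo n (p - s) := by
  simp only [walksTo, Set.mem_ofPred_eq, isKrewerasWalk_snoc, walkPos_snoc_last, eq_sub_iff_add_eq]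
  constructor
  · rintro ⟨⟨h1, h2, -⟩, h3⟩
    exact ⟨h2, h1, h3⟩
  · rintro ⟨h2, h1, h3⟩
    refine ⟨⟨h1, h2, ?_⟩, h3⟩
    rw [h3]
    exact hp

lemma walksTo_succ {n : ℕ} {p : ℤ × ℤ} (hp : 0 ≤ p.1 ∧ 0 ≤ p.2) :
    walksTo (n + 1) p = ⋃ s ∈ krewerasSteps,
      (fun w => (Fin.snoc w s : Fin (n + 1) → ℤ × ℤ)) '' walksTo n (p - s) := by
  ext w
  obtain ⟨v, s, rfl⟩ : ∃ v s, w = (Fin.snoc v s : Fin (n + 1) → ℤ × ℤ) :=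
    ⟨Fin.init w, w (Fin.last n), (Fin.snoc_init_self w).symm⟩
  rw [snoc_mem_walksTo hp]
  simp only [Set.mem_iUnion, Set.mem_image, exists_prop]
  constructor
  · rintro ⟨hs, hv⟩
    exact ⟨s, hs, v, hv, rfl⟩
  · rintro ⟨s', hs, v', hv, h⟩
    obtain ⟨rfl, rfl⟩ := Fin.snoc_inj.1 h
    exact ⟨hs, hv⟩

/-- Removing the last step: the recurrence for the number of Kreweras walks. -/
lemma f_succ (n : ℕ) {i j : ℤ} (hi : 0 ≤ i) (hj : 0 ≤ j) :
    f (n + 1) i j = f n (i + 1) j + f n i (j + 1) + f n (i - 1) (j - 1) := by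
  have inj (s : ℤ × ℤ) :
      Function.Injective (fun w : Fin n → ℤ × ℤ => (Fin.snoc w s : Fin (n + 1) → ℤ × ℤ)) :=
    fun _ _ h => (Fin.snoc_inj.1 h).1
  have disj {s s' : ℤ × ℤ} (h : s ≠ s') (A B : Set (Fin n → ℤ × ℤ)) :
      Disjoint ((fun w => (Fin.snoc w s : Fin (n + 1) → ℤ × ℤ)) '' A)
        ((fun w => (Fin.snoc w s' : Fin (n + 1) → ℤ × ℤ)) '' B) := by
    rw [Set.disjoint_left]
    rintro _ ⟨a, -, rfl⟩ ⟨b, -, hb⟩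
    exact h (Fin.snoc_inj.1 hb).2.symm
  have fin (s p : ℤ × ℤ) :
      ((fun w => (Fin.snoc w s : Fin (n + 1) → ℤ × ℤ)) '' walksTo n p).Finite :=
    (walksTo_finite n p).image _
  simp only [f_eq_ncard]
  rw [walksTo_succ ⟨hi, hj⟩]
  simp only [krewerasSteps, Set.biUnion_insert, Set.biUnion_singleton]
  rw [Set.ncard_union_eq (by
      rw [Set.disjoint_union_right]
      exact ⟨disj (by decide) _ _, disj (by decide) _ _⟩) (fin _ _) ((fin _ _).union (fin _ _)),
    Set.ncard_union_eq (disj (by decide) _ _) (fin _ _) (fin _ _),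
    Set.ncard_image_of_injective _ (inj _), Set.ncard_image_of_injective _ (inj _),
    Set.ncard_image_of_injective _ (inj _)]
  simp [add_assoc]

lemma f_neg {n : ℕ} {i j : ℤ} (h : ¬ (0 ≤ i ∧ 0 ≤ j)) : f n i j = 0 := by
  rw [f_eq_ncard, walksTo_eq_empty h, Set.ncard_empty]

lemma f_zero (i j : ℤ) : f 0 i j = if i = 0 ∧ j = 0 then 1 else 0 := by
  rw [f_eq_ncard]
  have h (w : Fin 0 → ℤ × ℤ) : w ∈ walksTo 0 (i, j) ↔ i = 0 ∧ j = 0 := by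
    simp [walksTo, IsKrewerasWalk, walkPos, Prod.ext_iff, eq_comm]
  split_ifs with hij
  · rw [show walksTo 0 (i, j) = Set.univ from
      Set.eq_univ_of_forall fun w => (h w).2 hij]
    simp [Set.ncard_univ]
  · rw [show walksTo 0 (i, j) = ∅ by ext w; simp [h, hij]]
    simp

/-! ### Power series and fixed points -/

/-- Power series in `t`, `x`, `y` over `ℚ`. -/
abbrev PS := MvPowerSeries (Fin 3) ℚ

/-- The power series in which the variable of index `k` does not occur. -/
def freeOf (k : Fin 3) : Subalgebra ℚ PS where
  carrier := {a | ∀ e : Fin 3 →₀ ℕ, e k ≠ 0 → MvPowerSeries.coeff e a = 0}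
  mul_mem' := by
    classical
    intro a b ha hb e he
    rw [MvPowerSeries.coeff_mul]
    refine Finset.sum_eq_zero fun p hp => ?_
    rw [Finset.HasAntidiagonal.mem_antidiagonal] at hp
    have : p.1 k + p.2 k ≠ 0 := by rwa [← Finsupp.add_apply, hp]
    by_cases h : p.1 k = 0
    · rw [hb p.2 (by omega), mul_zero]
    · rw [ha p.1 h, zero_mul]
  add_mem' := by
    intro a b ha hb e he
    rw [map_add, ha e he, hb e he, add_zero]
  algebraMap_mem' := by
    classical
    intro r e he
    have : e ≠ 0 := by rintro rfl; exact he rfl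
    simp [MvPowerSeries.algebraMap_apply, MvPowerSeries.coeff_C, this]

lemma mem_freeOf {k : Fin 3} {a : PS} :
    a ∈ freeOf k ↔ ∀ e : Fin 3 →₀ ℕ, e k ≠ 0 → MvPowerSeries.coeff e a = 0 := Iff.rfl

lemma X_mem_freeOf {k l : Fin 3} (h : l ≠ k) : (MvPowerSeries.X l : PS) ∈ freeOf k := by
  classical
  intro e he
  rw [MvPowerSeries.coeff_X, if_neg]
  rintro rfl
  exact he (Finsupp.single_eq_of_ne h.symm)

/-- Contraction principle: a map raising the order of differences has a fixed point, which avoids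
every variable that the map avoids. -/
lemma exists_fixed (Φ : PS → PS)
    (hΦ : ∀ a b, (a - b).order + 1 ≤ (Φ a - Φ b).order) :
    ∃ a, Φ a = a ∧ ∀ k, (∀ b ∈ freeOf k, Φ b ∈ freeOf k) → a ∈ freeOf k := by
  set u : ℕ → PS := fun k => Φ^[k] 0 with hu
  have usucc (k : ℕ) : u (k + 1) = Φ (u k) := Function.iterate_succ_apply' Φ k 0
  have ustep (k m : ℕ) (h : k ≤ m) : (k : ℕ∞) ≤ (u m - u k).order := by
    induction k generalizing m with
    | zero => simp
    | succ k ih =>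
      obtain ⟨m, rfl⟩ : ∃ m', m = m' + 1 := ⟨m - 1, by omega⟩
      rw [usucc, usucc]
      refine le_trans ?_ (hΦ _ _)
      push_cast
      gcongr
      exact ih m (by omega)
  let a : PS := fun e => MvPowerSeries.coeff e (u (e.degree + 1))
  have ha (e : Fin 3 →₀ ℕ) : MvPowerSeries.coeff e a = MvPowerSeries.coeff e (u (e.degree + 1)) :=
    rfl
  have alim (k : ℕ) : (k : ℕ∞) ≤ (a - u k).order := by
    refine MvPowerSeries.nat_le_order fun e he => ?_
    have h : MvPowerSeries.coeff e (u k - u (e.degree + 1)) = 0 := by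
      refine MvPowerSeries.coeff_of_lt_order (lt_of_lt_of_le ?_ (ustep (e.degree + 1) k (by omega)))
      exact_mod_cast Nat.lt_succ_self _
    rw [map_sub, sub_eq_zero] at h
    rw [map_sub, ha, h, sub_self]
  refine ⟨a, ?_, fun k hk e he => ?_⟩
  · ext e
    have h1 := MvPowerSeries.coeff_of_lt_order (f := a - u (e.degree + 1)) (d := e)
      (lt_of_lt_of_le (by exact_mod_cast Nat.lt_succ_self _) (alim (e.degree + 1)))
    have h2 := MvPowerSeries.coeff_of_lt_order (f := Φ a - Φ (u e.degree)) (d := e) (by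
      refine lt_of_lt_of_le ?_ (hΦ _ _)
      refine lt_of_lt_of_le ?_ (add_le_add_left (alim e.degree) 1)
      exact_mod_cast Nat.lt_succ_self _)
    rw [← usucc] at h2
    rw [map_sub, sub_eq_zero] at h1 h2
    rw [h1, h2]
  · have hmem (n : ℕ) : u n ∈ freeOf k := by
      induction n with
      | zero => exact (freeOf k).zero_mem
      | succ n ih => rw [usucc]; exact hk _ ih
    exact hmem _ e he

lemma order_X_mul (k : Fin 3) (a b : PS) : a.order + 1 ≤ (MvPowerSeries.X k * b * a).order := by
  refine le_trans ?_ MvPowerSeries.le_order_mul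
  rw [add_comm]
  gcongr
  rw [MvPowerSeries.one_le_order_iff_constCoeff_eq_zero]
  simp

/-- The parametrizing series `W = W(t)`. -/
lemma exists_W : ∃ W : PS, W = MvPowerSeries.X 0 * (2 + W ^ 3) ∧ W ∈ freeOf 1 ∧ W ∈ freeOf 2 := by
  obtain ⟨W, h, hfree⟩ := exists_fixed (fun w => MvPowerSeries.X 0 * (2 + w ^ 3)) fun a b => by
    convert order_X_mul 0 (a - b) (a ^ 2 + a * b + b ^ 2) using 2
    ring
  have key (k : Fin 3) (hk : 0 ≠ k) : W ∈ freeOf k := hfree k fun b hb =>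
    mul_mem (X_mem_freeOf hk) (add_mem (ofNat_mem _ 2) (pow_mem hb 3))
  exact ⟨W, h.symm, key 1 (by decide), key 2 (by decide)⟩

/-- The series `c` with `1 - X k * W ^ 2 * c = √(1 - X k * W ^ 2)`. -/
lemma exists_c (k : Fin 3) (W : PS) : ∃ c : PS, 2 * c = 1 + MvPowerSeries.X k * W ^ 2 * c ^ 2 ∧
    ∀ l, k ≠ l → W ∈ freeOf l → c ∈ freeOf l := by
  obtain ⟨c, h, hfree⟩ := exists_fixed
    (fun c => algebraMap ℚ PS (1 / 2) * (1 + MvPowerSeries.X k * W ^ 2 * c ^ 2)) fun a b => by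
    convert order_X_mul k (a - b) (algebraMap ℚ PS (1 / 2) * W ^ 2 * (a + b)) using 2
    ring
  refine ⟨c, ?_, fun l hl hW => hfree l fun b hb => ?_⟩
  · have h2 : (2 : PS) * algebraMap ℚ PS (1 / 2) = 1 := by
      rw [← map_ofNat (algebraMap ℚ PS) 2, ← map_mul]
      norm_num
    nth_rewrite 1 [← h]
    linear_combination (1 + MvPowerSeries.X k * W ^ 2 * c ^ 2) * h2
  · exact mul_mem (algebraMap_mem _ _) (add_mem (one_mem _)
      (mul_mem (mul_mem (X_mem_freeOf hl) (pow_mem hW 2)) (pow_mem hb 2)))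

/-! ### The functional equation and its uniqueness -/

/-- The kernel `xy - t(x + y + x²y²)` of the step set. -/
def kernel : PS := MvPowerSeries.X 1 * MvPowerSeries.X 2 - MvPowerSeries.X 0 *
  (MvPowerSeries.X 1 + MvPowerSeries.X 2 + MvPowerSeries.X 1 ^ 2 * MvPowerSeries.X 2 ^ 2)

/-- The exponent of `t ^ n * x ^ i * y ^ j`. -/
def expo (n i j : ℕ) : Fin 3 →₀ ℕ := Finsupp.equivFunOnFinite.symm ![n, i, j]

lemma expo_eta (e : Fin 3 →₀ ℕ) : expo (e 0) (e 1) (e 2) = e := by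
  ext k
  fin_cases k <;> rfl

lemma expo_le {n i j n' i' j' : ℕ} : expo n i j ≤ expo n' i' j' ↔ n ≤ n' ∧ i ≤ i' ∧ j ≤ j' := by
  rw [Finsupp.le_def]
  simp [Fin.forall_fin_succ, expo]

lemma expo_sub (n i j n' i' j' : ℕ) :
    expo n i j - expo n' i' j' = expo (n - n') (i - i') (j - j') := by
  ext k
  fin_cases k <;> rfl

lemma expo_inj {n i j n' i' j' : ℕ} : expo n i j = expo n' i' j' ↔ n = n' ∧ i = i' ∧ j = j' := by
  simp [DFunLike.ext_iff, Fin.forall_fin_succ, expo]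

lemma monomial_expo (n i j : ℕ) : MvPowerSeries.monomial (expo n i j) (1 : ℚ) =
    MvPowerSeries.X 0 ^ n * MvPowerSeries.X 1 ^ i * MvPowerSeries.X 2 ^ j := by
  rw [MvPowerSeries.X_pow_eq, MvPowerSeries.X_pow_eq, MvPowerSeries.X_pow_eq,
    MvPowerSeries.monomial_mul_monomial, MvPowerSeries.monomial_mul_monomial, one_mul, one_mul]
  have h : expo n i j = Finsupp.single 0 n + Finsupp.single 1 i + Finsupp.single 2 j := by
    ext k
    fin_cases k <;> simp [expo]
  rw [h]

lemma kernel_eq : kernel = MvPowerSeries.monomial (expo 0 1 1) 1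
    - MvPowerSeries.monomial (expo 1 1 0) 1 - MvPowerSeries.monomial (expo 1 0 1) 1
    - MvPowerSeries.monomial (expo 1 2 2) 1 := by
  simp only [monomial_expo, kernel]
  ring

/-- The functional equation determines the solution: comparing coefficients of
`t ^ n * x ^ (i + 1) * y ^ (j + 1)` eliminates the unknown `P` and `Q` and leaves the recurrence of
Kreweras walks. -/
lemma eq_krewerasGF {G P Q : PS} (hP : P ∈ freeOf 2) (hQ : Q ∈ freeOf 1)
    (h : kernel * G = MvPowerSeries.X 1 * MvPowerSeries.X 2 - P - Q) : G = KrewerasGF := by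
  classical
  have hc (n i j : ℕ) := congrArg (MvPowerSeries.coeff (expo n (i + 1) (j + 1))) h
  have hP' (n i j : ℕ) : MvPowerSeries.coeff (expo n (i + 1) (j + 1)) P = 0 :=
    hP _ (Nat.succ_ne_zero j)
  have hQ' (n i j : ℕ) : MvPowerSeries.coeff (expo n (i + 1) (j + 1)) Q = 0 :=
    hQ _ (Nat.succ_ne_zero i)
  have hxy : (MvPowerSeries.X 1 * MvPowerSeries.X 2 : PS) =
      MvPowerSeries.monomial (expo 0 1 1) 1 := by
    rw [monomial_expo]; ring
  simp only [hxy, kernel_eq, sub_mul, map_sub, MvPowerSeries.coeff_monomial_mul, hP', hQ', expo_le,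
    expo_sub, MvPowerSeries.coeff_monomial, expo_inj, one_mul, sub_zero] at hc
  suffices H : ∀ n i j : ℕ, MvPowerSeries.coeff (expo n i j) G = (f n i j : ℚ) by
    ext e
    rw [← expo_eta e, H]
    rfl
  intro n
  induction n with
  | zero =>
    intro i j
    have := hc 0 i j
    rw [f_zero]
    simpa using this
  | succ n ih =>
    intro i j
    have := hc (n + 1) i j
    rw [f_succ n (by positivity) (by positivity)]
    simp only [Nat.add_sub_cancel, Nat.sub_zero, ih] at this
    rcases i with _ | i
    · rw [f_neg (i := ((0 : ℕ) : ℤ) - 1) (by simp)]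
      simp at this
      push_cast
      linarith
    rcases j with _ | j
    · rw [f_neg (j := ((0 : ℕ) : ℤ) - 1) (by simp)]
      simp at this
      push_cast
      linarith
    simp at this
    push_cast
    simp only [add_sub_cancel_right]
    linarith

/-! ### An explicit solution of the functional equation -/

lemma X_ne_zero (k : Fin 3) : (MvPowerSeries.X k : PS) ≠ 0 := by
  classical
  intro h
  have := congrArg (MvPowerSeries.coeff (Finsupp.single k 1)) h
  simp [MvPowerSeries.coeff_X] at this

lemma X_sub_X_ne_zero : (MvPowerSeries.X 1 - MvPowerSeries.X 2 : PS) ≠ 0 := by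
  rw [sub_ne_zero]
  intro h
  exact absurd (MvPowerSeries.X_inj.1 h) (by decide)

lemma kernel_ne_zero : kernel ≠ 0 := by
  classical
  intro h
  have := congrArg (MvPowerSeries.coeff (expo 0 1 1)) h
  simp [kernel_eq, MvPowerSeries.coeff_monomial, expo_inj] at this

/-- The series `W * (X k - W) * c`. For `k = 1` and the series `W`, `c` of `exists_W` and `exists_c`
it is `t x F(t; x, 0) - W ^ 2 / 2`, the boundary term of the functional equation up to a constant in
`x`; for `k = 2` it is the same with `x` replaced by `y`. -/
abbrev catalytic (k : Fin 3) (W c : PS) : PS := W * (MvPowerSeries.X k - W) * c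

/-- The functional equation with the boundary terms prescribed by `W`, `c` and `c'` has a power
series solution, i.e. the kernel divides its right-hand side. The solution is
`(2 + W ^ 3) * E / (1 - x * y * W * E)` with `E = c + (y - W) * (c - c') / (x - y)`. -/
lemma exists_solution {W c c' : PS} (hW : W = MvPowerSeries.X 0 * (2 + W ^ 3))
    (hc : 2 * c = 1 + MvPowerSeries.X 1 * W ^ 2 * c ^ 2)
    (hc' : 2 * c' = 1 + MvPowerSeries.X 2 * W ^ 2 * c' ^ 2) :
    ∃ G : PS, kernel * G = MvPowerSeries.X 1 * MvPowerSeries.X 2 -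
      (W ^ 2 + catalytic 1 W c) - catalytic 2 W c' := by
  set x : PS := MvPowerSeries.X 1 with hx
  set y : PS := MvPowerSeries.X 2 with hy
  -- The divided difference `d = (c - c') / (x - y)` solves `D * d = W ^ 2 * c ^ 2`, `D` a unit.
  obtain ⟨d, hd⟩ : ∃ d : PS, (x - y) * d = c - c' := by
    set D : PS := 2 - W ^ 2 * y * (c + c') with hD
    have hD0 : MvPowerSeries.constantCoeff D ≠ 0 := by
      rw [hD, map_sub, map_ofNat]
      simp [hy]
    have hDD : D * D⁻¹ = 1 := MvPowerSeries.mul_inv_cancel D hD0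
    refine ⟨W ^ 2 * c ^ 2 * D⁻¹, ?_⟩
    have : D * (c - c') = (x - y) * W ^ 2 * c ^ 2 := by
      rw [hD]
      linear_combination hc - hc'
    linear_combination (c - c') * hDD - D⁻¹ * this
  set E : PS := c + (y - W) * d with hE
  have hxyE : (x - y) * E = (x - W) * c - (y - W) * c' := by
    rw [hE]
    linear_combination (y - W) * hd
  set U : PS := 1 - x * y * W * E with hU
  have hU0 : MvPowerSeries.constantCoeff U ≠ 0 := by
    simp [hU, hx]
  have hUU : U * U⁻¹ = 1 := MvPowerSeries.mul_inv_cancel U hU0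
  have hK : kernel * (2 + W ^ 3) = x * y * (2 + W ^ 3) - W * (x + y + x ^ 2 * y ^ 2) := by
    rw [kernel]
    linear_combination (x + y + x ^ 2 * y ^ 2) * hW
  -- After multiplication by `x - y`, this is `(A(x) - A(y)) * (A(x) + A(y)) = I(x) - I(y)` with
  -- `A(x) = (1 / W - 1 / x) * √(1 - x * W ^ 2)`, cleared of denominators.
  have key : kernel * (2 + W ^ 3) * E =
      (x * y - (W ^ 2 + catalytic 1 W c) - catalytic 2 W c') * U := by
    apply mul_left_cancel₀ X_sub_X_ne_zero
    rw [hK, hU]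
    simp only [catalytic, ← hx, ← hy]
    linear_combination (x * y * (2 + W ^ 3) - W * (x + y + x ^ 2 * y ^ 2) +
      x * y * W * (x * y - (W ^ 2 + W * (x - W) * c) - W * (y - W) * c')) * hxyE +
      y * (x - W) ^ 2 * hc - x * (y - W) ^ 2 * hc'
  refine ⟨(2 + W ^ 3) * E * U⁻¹, ?_⟩
  linear_combination U⁻¹ * key +
    (x * y - (W ^ 2 + catalytic 1 W c) - catalytic 2 W c') * hUU

/-! ### Algebraicity -/

lemma isAlgebraic_X (k : Fin 3) : IsAlgebraic (MvPolynomial (Fin 3) ℚ) (MvPowerSeries.X k : PS) := by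
  have : (MvPowerSeries.X k : PS) = algebraMap (MvPolynomial (Fin 3) ℚ) PS (MvPolynomial.X k) := by
    rw [MvPowerSeries.algebraMap_apply']
    simp
  rw [this]
  exact isAlgebraic_algebraMap _

lemma isAlgebraic_W {W : PS} (hW : W = MvPowerSeries.X 0 * (2 + W ^ 3)) :
    IsAlgebraic (MvPolynomial (Fin 3) ℚ) W := by
  refine ⟨Polynomial.C (MvPolynomial.X 0) * (2 + Polynomial.X ^ 3) - Polynomial.X, fun h => ?_, ?_⟩
  · have := congrArg (fun p => Polynomial.coeff p 3) h
    simp [Polynomial.coeff_X, Polynomial.coeff_ofNat_succ] at this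
  · have hX : algebraMap (MvPolynomial (Fin 3) ℚ) PS (MvPolynomial.X 0) = MvPowerSeries.X 0 := by
      rw [MvPowerSeries.algebraMap_apply']
      simp
    simp only [map_sub, map_mul, map_add, map_pow, Polynomial.aeval_C, Polynomial.aeval_X, hX,
      map_ofNat]
    linear_combination -hW

lemma W_ne_zero {W : PS} (hW : W = MvPowerSeries.X 0 * (2 + W ^ 3)) : W ≠ 0 := by
  rintro rfl
  have : (MvPowerSeries.X 0 : PS) * 2 = 0 := by linear_combination -hW
  have h2 : (2 : PS) ≠ 0 := fun h => by
    have := congrArg MvPowerSeries.constantCoeff h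
    rw [map_ofNat, map_zero] at this
    norm_num at this
  exact mul_ne_zero (X_ne_zero 0) h2 this

/-- `c` is algebraic because `1 - X k * W ^ 2 * c` is a square root of `1 - X k * W ^ 2`. -/
lemma isAlgebraic_c {k : Fin 3} {W c : PS} (hW : W = MvPowerSeries.X 0 * (2 + W ^ 3))
    (hc : 2 * c = 1 + MvPowerSeries.X k * W ^ 2 * c ^ 2) :
    IsAlgebraic (MvPolynomial (Fin 3) ℚ) c := by
  have hz : IsAlgebraic (MvPolynomial (Fin 3) ℚ) (MvPowerSeries.X k * W ^ 2) :=
    (isAlgebraic_X k).mul ((isAlgebraic_W hW).pow 2)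
  have hz0 : MvPowerSeries.X k * W ^ 2 ≠ 0 :=
    mul_ne_zero (X_ne_zero k) (pow_ne_zero 2 (W_ne_zero hW))
  have hs : IsAlgebraic (MvPolynomial (Fin 3) ℚ) (1 - MvPowerSeries.X k * W ^ 2 * c) := by
    refine IsAlgebraic.of_pow (n := 2) two_pos ?_
    have : (1 - MvPowerSeries.X k * W ^ 2 * c) ^ 2 = 1 - MvPowerSeries.X k * W ^ 2 := by
      linear_combination -(MvPowerSeries.X k * W ^ 2) * hc
    rw [this]
    exact isAlgebraic_one.sub hz
  refine IsAlgebraic.of_mul (mem_nonZeroDivisors_of_ne_zero hz0) hz ?_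
  have := isAlgebraic_one.sub hs
  rwa [sub_sub_cancel] at this

lemma isAlgebraic_catalytic {k : Fin 3} {W c : PS} (hW : W = MvPowerSeries.X 0 * (2 + W ^ 3))
    (hc : 2 * c = 1 + MvPowerSeries.X k * W ^ 2 * c ^ 2) :
    IsAlgebraic (MvPolynomial (Fin 3) ℚ) (catalytic k W c) :=
  ((isAlgebraic_W hW).mul ((isAlgebraic_X k).sub (isAlgebraic_W hW))).mul (isAlgebraic_c hW hc)

lemma catalytic_mem_freeOf {k l : Fin 3} {W c : PS} (hkl : k ≠ l) (hW : W ∈ freeOf l)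
    (hc : c ∈ freeOf l) : catalytic k W c ∈ freeOf l :=
  mul_mem (mul_mem hW (sub_mem (X_mem_freeOf hkl) hW)) hc

lemma isAlgebraic_kernel : IsAlgebraic (MvPolynomial (Fin 3) ℚ) kernel :=
  ((isAlgebraic_X 1).mul (isAlgebraic_X 2)).sub <| (isAlgebraic_X 0).mul <|
    ((isAlgebraic_X 1).add (isAlgebraic_X 2)).add
      (((isAlgebraic_X 1).pow 2).mul ((isAlgebraic_X 2).pow 2))

/-- The complete generating function of Kreweras walks is algebraic. -/
theorem krewerasGF_algebraic :
    ∃ P : Polynomial (MvPolynomial (Fin 3) ℚ), P ≠ 0 ∧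
      Polynomial.eval₂ MvPolynomial.coeToMvPowerSeries.ringHom KrewerasGF P = 0 := by
  obtain ⟨W, hW, hW1, hW2⟩ := exists_W
  obtain ⟨c, hc, hcfree⟩ := exists_c 1 W
  obtain ⟨c', hc', hcfree'⟩ := exists_c 2 W
  obtain ⟨G, hG⟩ := exists_solution hW hc hc'
  have hP : W ^ 2 + catalytic 1 W c ∈ freeOf 2 :=
    add_mem (pow_mem hW2 2) (catalytic_mem_freeOf (by decide) hW2 (hcfree 2 (by decide) hW2))
  have hQ : catalytic 2 W c' ∈ freeOf 1 :=
    catalytic_mem_freeOf (by decide) hW1 (hcfree' 1 (by decide) hW1)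
  have hGF : G = KrewerasGF := eq_krewerasGF hP hQ hG
  have halg : IsAlgebraic (MvPolynomial (Fin 3) ℚ) KrewerasGF := by
    refine IsAlgebraic.of_mul (mem_nonZeroDivisors_of_ne_zero kernel_ne_zero) isAlgebraic_kernel ?_
    rw [← hGF, hG]
    exact ((((isAlgebraic_X 1).mul (isAlgebraic_X 2)).sub
      (((isAlgebraic_W hW).pow 2).add (isAlgebraic_catalytic hW hc))).sub
        (isAlgebraic_catalytic hW hc'))
  obtain ⟨p, hp0, hp⟩ := halg
  refine ⟨p, hp0, ?_⟩
  have hmap : (MvPolynomial.coeToMvPowerSeries.ringHom : MvPolynomial (Fin 3) ℚ →+* PS) =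
      algebraMap (MvPolynomial (Fin 3) ℚ) PS := by
    refine RingHom.ext fun q => ?_
    simp [MvPowerSeries.algebraMap_apply']
  rw [hmap]
  exact hp
end
end
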